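/- arXiv:math/0507398 — 4 statements merged into one kernel-verified Lean document; each statement's English description precedes it below -/
import Mathlib

section
/- Let τ be a symplectic (i.e. alternating and nondegenerate) bilinear form on ⋀³V such that τ(x,y) = 0 for every nonzero v ∈ V and all x, y ∈ F_v. Then there exists a nonzero constant c ∈ ℂ with τ = c·σ. -/
open ExteriorAlgebra

/-- The subspace `F_v = v ∧ ⋀²V = {v∧β : β ∈ ⋀²V}` of `⋀³V`, as a submodule of the
exterior algebra. -/
noncomputable def Fsub {V : Type*} [AddCommGroup V] [Module ℂ V] (v : V) :
    Submodule ℂ (ExteriorAlgebra ℂ V) :=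
  (⋀[ℂ]^2 V).map (LinearMap.mulLeft ℂ (ExteriorAlgebra.ι ℂ v))

/-!
Because `τ` vanishes on `F_v × F_v`, the multilinear map
`(v₁, …, v₆) ↦ τ (v₁ ∧ v₂ ∧ v₃, v₄ ∧ v₅ ∧ v₆)` is zero as soon as two of its arguments agree: two
arguments in the same block make a trivector zero, and two in different blocks put both trivectors
in the same `F_v`. Hence it is alternating and `τ` factors through the wedge product
`⋀³V × ⋀³V → ⋀⁶V`. Since `⋀⁶V` is a line, `τ = c·σ`.

Over any commutative ring of scalars, `c` is not a zero divisor: if `t * c = 0`, then nondegeneracy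
forces `t` to annihilate `⋀³V`, hence also `⋀⁶V = ⋀³V ∧ ⋀³V`, which is free of rank one, so `t = 0`.
-/

section AlternatingOfBilinear

variable {R ι κ M P Q N : Type*} [CommSemiring R] [AddCommMonoid M] [Module R M]
  [AddCommMonoid P] [Module R P] [AddCommMonoid Q] [Module R Q] [AddCommMonoid N] [Module R N]

/-- The map `(a, b) ↦ B (f a) (g b)` as an alternating map in the concatenation of `a` and `b`,
for alternating maps `f`, `g` and a bilinear map `B` such that `B (f a) (g b) = 0` whenever `a` and
`b` share an entry. Unlike `AlternatingMap.domCoprod`, it involves no sum over shuffles. -/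
noncomputable def alternatingOfBilinear (B : P →ₗ[R] Q →ₗ[R] N) (f : M [⋀^ι]→ₗ[R] P)
    (g : M [⋀^κ]→ₗ[R] Q) (h : ∀ a b i j, a i = b j → B (f a) (g b) = 0) :
    M [⋀^ι ⊕ κ]→ₗ[R] N where
  toMultilinearMap := (TensorProduct.lift B).compMultilinearMap
    (f.toMultilinearMap.domCoprod g.toMultilinearMap)
  map_eq_zero_of_eq' v i j hv hij := by
    change B (f fun k => v (Sum.inl k)) (g fun k => v (Sum.inr k)) = 0
    rcases i with i | i <;> rcases j with j | j
    · rw [f.map_eq_zero_of_eq _ hv (ne_of_apply_ne Sum.inl hij), map_zero, LinearMap.zero_apply]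
    · exact h _ _ i j hv
    · exact h _ _ j i hv.symm
    · rw [g.map_eq_zero_of_eq _ hv (ne_of_apply_ne Sum.inr hij), map_zero]

@[simp]
theorem alternatingOfBilinear_apply (B : P →ₗ[R] Q →ₗ[R] N) (f : M [⋀^ι]→ₗ[R] P)
    (g : M [⋀^κ]→ₗ[R] Q) (h : ∀ a b i j, a i = b j → B (f a) (g b) = 0) (v : ι ⊕ κ → M) :
    alternatingOfBilinear B f g h v = B (f (v ∘ Sum.inl)) (g (v ∘ Sum.inr)) :=
  rfl

end AlternatingOfBilinear

theorem eq_apply_symm_one_smul {R L : Type*} [CommSemiring R] [AddCommMonoid L] [Module R L]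
    (e : L ≃ₗ[R] R) (φ : L →ₗ[R] R) : φ = φ (e.symm 1) • e.toLinearMap := by
  ext w
  calc
    φ w = φ (e w • e.symm 1) := by rw [← map_smul, smul_eq_mul, mul_one, e.symm_apply_apply]
    _ = φ (e.symm 1) * e w := by rw [map_smul, smul_eq_mul, mul_comm]

section Wedge

variable {R M N : Type*} [CommRing R] [AddCommGroup M] [Module R M] [AddCommGroup N] [Module R N]
  {m n : ℕ}

variable (R M m n) in
/-- The wedge product `⋀ᵐM × ⋀ⁿM → ⋀ᵐ⁺ⁿM` as a bilinear map. -/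
noncomputable def wedge : ⋀[R]^m M →ₗ[R] ⋀[R]^n M →ₗ[R] ⋀[R]^(m + n) M :=
  DirectSum.gMulLHom R fun i : ℕ => ⋀[R]^i M

@[simp]
theorem coe_wedge (x : ⋀[R]^m M) (y : ⋀[R]^n M) :
    (wedge R M m n x y : ExteriorAlgebra R M) = x * y :=
  rfl

theorem wedge_ιMulti_ιMulti (a : Fin m → M) (b : Fin n → M) :
    wedge R M m n (exteriorPower.ιMulti R m a) (exteriorPower.ιMulti R n b) =
      exteriorPower.ιMulti R (m + n) (Fin.append a b) :=
  Subtype.ext <| by simp [ExteriorAlgebra.ιMulti_mul_ιMulti]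

theorem exists_eq_compr₂_wedge (τ : ⋀[R]^m M →ₗ[R] ⋀[R]^n M →ₗ[R] N)
    (h : ∀ a b i j, a i = b j → τ (exteriorPower.ιMulti R m a) (exteriorPower.ιMulti R n b) = 0) :
    ∃ φ : ⋀[R]^(m + n) M →ₗ[R] N, τ = (wedge R M m n).compr₂ φ := by
  let A : M [⋀^Fin (m + n)]→ₗ[R] N :=
    (alternatingOfBilinear τ (exteriorPower.ιMulti R m) (exteriorPower.ιMulti R n) h).domDomCongr
      finSumFinEquiv
  refine ⟨exteriorPower.alternatingMapLinearEquiv A, ?_⟩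
  ext a b
  have hleft : (Fin.append a b ∘ finSumFinEquiv) ∘ Sum.inl = a := funext (Fin.append_left a b)
  have hright : (Fin.append a b ∘ finSumFinEquiv) ∘ Sum.inr = b := funext (Fin.append_right a b)
  simp only [LinearMap.compAlternatingMap_apply, LinearMap.compr₂_apply, wedge_ιMulti_ιMulti,
    exteriorPower.alternatingMapLinearEquiv_apply_ιMulti, AlternatingMap.domDomCongr_apply,
    alternatingOfBilinear_apply, hleft, hright, A]

theorem smul_exteriorPower_add_eq_zero {t : R} (ht : ∀ x : ⋀[R]^m M, t • x = 0)
    (w : ⋀[R]^(m + n) M) : t • w = 0 := by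
  have hw : (w : ExteriorAlgebra R M) ∈ (⋀[R]^m M) * ⋀[R]^n M := by
    simpa only [← pow_add] using w.2
  refine Subtype.ext (Submodule.mul_induction_on (C := fun z => t • z = 0) hw ?_ ?_)
  · intro x hx y _
    have hx0 : t • x = 0 := congrArg Subtype.val (ht ⟨x, hx⟩)
    rw [← smul_mul_assoc, hx0, zero_mul]
  · intro x y hx hy
    rw [smul_add, hx, hy, add_zero]

theorem mem_nonZeroDivisors_of_separatingLeft_smul_wedge (e : ⋀[R]^(m + n) M ≃ₗ[R] R) {c : R}
    (h : (c • (wedge R M m n).compr₂ e.toLinearMap).SeparatingLeft) : c ∈ nonZeroDivisors R := by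
  refine mem_nonZeroDivisors_iff_right.mpr fun t htc => ?_
  have ht (x : ⋀[R]^m M) : t • x = 0 := h _ fun y => by
    simp [← mul_assoc, htc]
  have htop : t • e.symm 1 = 0 := smul_exteriorPower_add_eq_zero ht _
  simpa using congrArg e htop

end Wedge

section VectorWedge

variable {R M : Type*} [CommRing R] [AddCommGroup M] [Module R M] {m n : ℕ}

variable (R m) in
/-- The submodule `v ∧ ⋀ᵐM` of `⋀ᵐ⁺¹M`, taken inside the exterior algebra: `F_v` for an arbitrary
degree and ring of scalars. `Fsub v` is the case `R = ℂ`, `m = 2`. -/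
noncomputable def vectorWedge (v : M) : Submodule R (ExteriorAlgebra R M) :=
  (⋀[R]^m M).map (LinearMap.mulLeft R (ExteriorAlgebra.ι R v))

theorem ιMulti_mem_vectorWedge_zero (a : Fin (m + 1) → M) :
    ExteriorAlgebra.ιMulti R (m + 1) a ∈ vectorWedge R m (a 0) :=
  ⟨_, (exteriorPower.ιMulti R m (Matrix.vecTail a)).2,
    (ExteriorAlgebra.ιMulti_succ_apply a).symm⟩

theorem ιMulti_mem_vectorWedge (a : Fin (m + 1) → M) (i : Fin (m + 1)) :
    ExteriorAlgebra.ιMulti R (m + 1) a ∈ vectorWedge R m (a i) := by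
  rcases eq_or_ne 0 i with rfl | hi
  · exact ιMulti_mem_vectorWedge_zero a
  · have h := ιMulti_mem_vectorWedge_zero (R := R) (a ∘ Equiv.swap 0 i)
    rw [AlternatingMap.map_swap _ _ hi, neg_mem_iff] at h
    simpa only [Function.comp_apply, Equiv.swap_apply_left] using h

theorem apply_ιMulti_ιMulti_eq_zero_of_eq {N : Type*} [AddCommGroup N] [Module R N]
    {τ : ⋀[R]^(m + 1) M →ₗ[R] ⋀[R]^(n + 1) M →ₗ[R] N}
    (hτ : ∀ v : M, v ≠ 0 → ∀ (x : ⋀[R]^(m + 1) M) (y : ⋀[R]^(n + 1) M),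
      (x : ExteriorAlgebra R M) ∈ vectorWedge R m v →
        (y : ExteriorAlgebra R M) ∈ vectorWedge R n v → τ x y = 0)
    (a : Fin (m + 1) → M) (b : Fin (n + 1) → M) (i : Fin (m + 1)) (j : Fin (n + 1))
    (hab : a i = b j) :
    τ (exteriorPower.ιMulti R (m + 1) a) (exteriorPower.ιMulti R (n + 1) b) = 0 := by
  by_cases ha : a i = 0
  · rw [AlternatingMap.map_coord_zero _ i ha, map_zero, LinearMap.zero_apply]
  · exact hτ (a i) ha _ _ (ιMulti_mem_vectorWedge a i) (hab ▸ ιMulti_mem_vectorWedge b j)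

theorem stmt5_general (vol : ExteriorAlgebra R M →ₗ[R] R)
    (hvol : Function.Bijective fun x : ⋀[R]^(m + 1 + (n + 1)) M => vol x)
    (τ : ⋀[R]^(m + 1) M →ₗ[R] ⋀[R]^(n + 1) M →ₗ[R] R) (hnd : τ.SeparatingLeft)
    (hτ : ∀ v : M, v ≠ 0 → ∀ (x : ⋀[R]^(m + 1) M) (y : ⋀[R]^(n + 1) M),
      (x : ExteriorAlgebra R M) ∈ vectorWedge R m v →
        (y : ExteriorAlgebra R M) ∈ vectorWedge R n v → τ x y = 0) :
    ∃ c ∈ nonZeroDivisors R, ∀ (x : ⋀[R]^(m + 1) M) (y : ⋀[R]^(n + 1) M),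
      τ x y = c * vol ((x : ExteriorAlgebra R M) * (y : ExteriorAlgebra R M)) := by
  let e : ⋀[R]^(m + 1 + (n + 1)) M ≃ₗ[R] R :=
    LinearEquiv.ofBijective (vol.domRestrict (⋀[R]^(m + 1 + (n + 1)) M)) hvol
  obtain ⟨φ, hφ⟩ := exists_eq_compr₂_wedge τ (apply_ιMulti_ιMulti_eq_zero_of_eq hτ)
  have hτe : τ = φ (e.symm 1) • (wedge R M (m + 1) (n + 1)).compr₂ e.toLinearMap := by
    rw [hφ]
    exact congrArg (wedge R M (m + 1) (n + 1)).compr₂ (eq_apply_symm_one_smul e φ)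
  exact ⟨φ (e.symm 1), mem_nonZeroDivisors_of_separatingLeft_smul_wedge e (hτe ▸ hnd),
    fun x y => LinearMap.congr_fun₂ hτe x y⟩

end VectorWedge

/-- If `τ` is a symplectic (alternating, nondegenerate) bilinear form on
`⋀³V` vanishing on `F_v × F_v` for every nonzero `v ∈ V`, then `τ = c·σ` for some
nonzero constant `c`, where `σ(x,y) = vol(x∧y)`. -/
theorem stmt5 (V : Type*) [AddCommGroup V] [Module ℂ V] [FiniteDimensional ℂ V]
    (hV : Module.finrank ℂ V = 6)
    (vol : ExteriorAlgebra ℂ V →ₗ[ℂ] ℂ)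
    (hvol : Function.Bijective fun x : ⋀[ℂ]^6 V => vol x)
    (τ : ↥(⋀[ℂ]^3 V) →ₗ[ℂ] ↥(⋀[ℂ]^3 V) →ₗ[ℂ] ℂ)
    (halt : ∀ x, τ x x = 0)
    (hnd : ∀ x, (∀ y, τ x y = 0) → x = 0)
    (hF : ∀ v : V, v ≠ 0 → ∀ x y : ↥(⋀[ℂ]^3 V),
      (x : ExteriorAlgebra ℂ V) ∈ Fsub v → (y : ExteriorAlgebra ℂ V) ∈ Fsub v →
        τ x y = 0) :
    ∃ c : ℂ, c ≠ 0 ∧ ∀ x y : ↥(⋀[ℂ]^3 V),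
      τ x y = c * vol ((x : ExteriorAlgebra ℂ V) * (y : ExteriorAlgebra ℂ V)) := by
  obtain ⟨c, hc, hτ⟩ := stmt5_general (m := 2) (n := 2) vol hvol τ hnd hF
  exact ⟨c, nonZeroDivisors.ne_zero hc, hτ⟩
end

section
/- Let v₀ ∈ V be nonzero and let V₀ ⊂ V be a 5-dimensional subspace with V = ℂv₀ ⊕ V₀. Let W ⊆ ⋀²V₀ be a subspace with dim W ≤ 2. For τ ∈ V₀ define the symmetric bilinear form b_τ on W by b_τ(α,β) = vol(v₀∧τ∧α∧β). Then the linear map V₀ → {symmetric bilinear forms on W}, τ ↦ b_τ, is surjective if and only if W contains no nonzero decomposable element, i.e. no nonzero element of the form u∧u' with u, u' ∈ V₀. -/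
open ExteriorAlgebra

/-- The image of `⋀ᵏW` in the exterior algebra of `V`, for a subspace `W ⊆ V`. -/
noncomputable def extSub {V : Type*} [AddCommGroup V] [Module ℂ V]
    (W : Submodule ℂ V) (k : ℕ) : Submodule ℂ (ExteriorAlgebra ℂ V) :=
  (⋀[ℂ]^k ↥W).map (ExteriorAlgebra.map W.subtype).toLinearMap

/-!
Since `dim W ≤ 2` and the field is algebraically closed, every functional on the symmetric bilinear
forms on `W` is an evaluation `B ↦ B p q`: a binary quadratic form is a product of linear forms.
Hence `τ ↦ b_τ` fails to be surjective exactly when `vol (v₀ ∧ τ ∧ p ∧ q)` vanishes identically in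
`τ` for some nonzero `p, q ∈ W`, i.e. when `p ∧ q = 0`.

If `x` is decomposable, then `x ∧ x = 0`. Conversely, let `p ∧ q = 0`. As `dim V₀` is odd, some
covector `φ ≠ 0` satisfies `φ ⌋ p = 0`. The vector `φ ⌋ q` then annihilates `p`, so either
`p ∧ p = 0`, or `φ` also kills `q` and `q ∧ q` is proportional to `p ∧ p`, both being killed by `φ`
and of codegree one. In either case a nonzero combination of `p` and `q` squares to zero, and
contracting a bivector of square zero with a covector exhibits one of its factors.
-/

local infixl:70 "⌋" => CliffordAlgebra.contractLeft

section Contraction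

variable {R M N : Type*} [CommRing R] [AddCommGroup M] [Module R M] [AddCommGroup N] [Module R N]

theorem contractLeft_map (f : M →ₗ[R] N) (φ : Module.Dual R N) (x : ExteriorAlgebra R M) :
    φ⌋(ExteriorAlgebra.map f x) = ExteriorAlgebra.map f ((φ ∘ₗ f)⌋x) := by
  induction x using CliffordAlgebra.left_induction with
  | algebraMap r => simp [CliffordAlgebra.contractLeft_algebraMap]
  | add x y hx hy => simp only [map_add, hx, hy]
  | ι_mul x v hx =>
    simp only [map_mul, map_apply_ι, CliffordAlgebra.contractLeft_ι_mul, hx, map_sub, map_smul,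
      LinearMap.comp_apply]

theorem contractLeft_mul_of_mem (φ : Module.Dual R M) {k : ℕ} {x : ExteriorAlgebra R M}
    (hx : x ∈ ⋀[R]^k M) (y : ExteriorAlgebra R M) :
    φ⌋(x * y) = φ⌋x * y + (-1 : R) ^ k • (x * (φ⌋y)) := by
  induction hx using Submodule.pow_induction_on_left' (M := LinearMap.range (ι R)) with
  | algebraMap r =>
    simp [CliffordAlgebra.contractLeft_algebraMap_mul, CliffordAlgebra.contractLeft_algebraMap]
  | add x₁ x₂ k _ _ h₁ h₂ => simp only [add_mul, map_add, h₁, h₂, smul_add]; abel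
  | mem_mul m hm k x _ hx =>
    obtain ⟨v, rfl⟩ := hm
    simp only [mul_assoc, CliffordAlgebra.contractLeft_ι_mul, hx, mul_add, sub_mul, mul_smul_comm,
      smul_mul_assoc, pow_succ]
    module

theorem ι_mul_mem (v : M) {k : ℕ} {x : ExteriorAlgebra R M} (hx : x ∈ ⋀[R]^k M) :
    ι R v * x ∈ ⋀[R]^(k + 1) M := by
  rw [exteriorPower, pow_succ']
  exact Submodule.mul_mem_mul ⟨v, rfl⟩ hx

theorem contractLeft_mem (φ : Module.Dual R M) {k : ℕ} {x : ExteriorAlgebra R M}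
    (hx : x ∈ ⋀[R]^(k + 1) M) : φ⌋x ∈ ⋀[R]^k M := by
  induction k generalizing x with
  | zero =>
    rw [zero_add, exteriorPower, pow_one] at hx
    obtain ⟨v, rfl⟩ := hx
    rw [CliffordAlgebra.contractLeft_ι, exteriorPower, pow_zero]
    exact Submodule.algebraMap_mem _
  | succ k ih =>
    rw [exteriorPower, pow_succ'] at hx
    induction hx using Submodule.mul_induction_on' with
    | mem_mul_mem m hm x hx =>
      obtain ⟨v, rfl⟩ := hm
      rw [CliffordAlgebra.contractLeft_ι_mul]
      exact sub_mem (Submodule.smul_mem _ _ hx) (ι_mul_mem v (ih hx))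
    | add x _ y _ hx hy => rw [map_add]; exact add_mem hx hy

theorem ι_mul_eq_neg_one_pow_smul (v : M) {k : ℕ} {x : ExteriorAlgebra R M}
    (hx : x ∈ ⋀[R]^k M) : ι R v * x = (-1 : R) ^ k • (x * ι R v) := by
  induction hx using Submodule.pow_induction_on_left' (M := LinearMap.range (ι R)) with
  | algebraMap r => simp [Algebra.commutes]
  | add x₁ x₂ k _ _ h₁ h₂ => simp only [mul_add, add_mul, h₁, h₂, smul_add]
  | mem_mul m hm k x _ hx =>
    obtain ⟨w, rfl⟩ := hm
    rw [← mul_assoc, eq_neg_of_add_eq_zero_left (ι_add_mul_swap v w), neg_mul, mul_assoc, hx,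
      mul_smul_comm, pow_succ, mul_neg_one, neg_smul, mul_assoc]

theorem commute_of_mem_of_even {k : ℕ} (hk : Even k) {x : ExteriorAlgebra R M}
    (hx : x ∈ ⋀[R]^k M) (y : ExteriorAlgebra R M) : Commute x y := by
  induction y using ExteriorAlgebra.induction with
  | algebraMap r => exact Algebra.commute_algebraMap_right r x
  | ι v => rw [commute_iff_eq, ι_mul_eq_neg_one_pow_smul v hx, hk.neg_one_pow, one_smul]
  | mul y z hy hz => exact hy.mul_right hz
  | add y z hy hz => exact hy.add_right hz

theorem eq_ι_mul_contractLeft {φ : Module.Dual R M} {v : M} (hφ : φ v = 1)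
    {x : ExteriorAlgebra R M} (hx : ι R v * x = 0) : x = ι R v * (φ⌋x) := by
  have h := CliffordAlgebra.contractLeft_ι_mul (d := φ) v x
  rw [hx, map_zero, hφ, one_smul] at h
  exact sub_eq_zero.mp h.symm

theorem eq_contractLeft_ι_mul {φ : Module.Dual R M} {v : M} (hφ : φ v = 1)
    {x : ExteriorAlgebra R M} (hx : φ⌋x = 0) : x = φ⌋(ι R v * x) := by
  rw [CliffordAlgebra.contractLeft_ι_mul, hφ, hx, one_smul, mul_zero, sub_zero]

end Contraction

section Euler

variable {R M κ : Type*} [CommRing R] [AddCommGroup M] [Module R M] [Fintype κ]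

theorem sum_ι_mul_contractLeft (b : Module.Basis κ R M) {k : ℕ} {x : ExteriorAlgebra R M}
    (hx : x ∈ ⋀[R]^k M) : ∑ i, ι R (b i) * (b.coord i⌋x) = (k : R) • x := by
  induction hx using Submodule.pow_induction_on_left' (M := LinearMap.range (ι R)) with
  | algebraMap r => simp [CliffordAlgebra.contractLeft_algebraMap]
  | add x₁ x₂ k _ _ h₁ h₂ => simp only [map_add, mul_add, Finset.sum_add_distrib, h₁, h₂, smul_add]
  | mem_mul m hm k x _ hx =>
    obtain ⟨v, rfl⟩ := hm
    have anticomm (i : κ) : ι R (b i) * (ι R v * (b.coord i⌋x)) =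
        -(ι R v * (ι R (b i) * (b.coord i⌋x))) := by
      rw [← mul_assoc, eq_neg_of_add_eq_zero_left (ι_add_mul_swap (b i) v), neg_mul, mul_assoc]
    calc ∑ i, ι R (b i) * (b.coord i⌋(ι R v * x))
        = ι R (∑ i, b.coord i v • b i) * x + ι R v * ∑ i, ι R (b i) * (b.coord i⌋x) := by
          simp only [CliffordAlgebra.contractLeft_ι_mul, mul_sub, anticomm, sub_neg_eq_add,
            Finset.sum_add_distrib, Finset.mul_sum, Finset.sum_mul, map_sum, map_smul,
            mul_smul_comm, smul_mul_assoc]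
      _ = ((k + 1 : ℕ) : R) • (ι R v * x) := by
          simp only [Module.Basis.coord_apply, b.sum_repr, hx, mul_smul_comm, Nat.cast_succ]
          module

theorem sum_contractLeft_ι_mul (b : Module.Basis κ R M) {k : ℕ} {x : ExteriorAlgebra R M}
    (hx : x ∈ ⋀[R]^k M) :
    ∑ i, b.coord i⌋(ι R (b i) * x) = ((Fintype.card κ : R) - k) • x := by
  simp only [CliffordAlgebra.contractLeft_ι_mul, Module.Basis.coord_apply, b.repr_self,
    Finsupp.single_eq_same, one_smul, Finset.sum_sub_distrib, Finset.sum_const, Finset.card_univ,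
    sum_ι_mul_contractLeft b hx, sub_smul, Nat.cast_smul_eq_nsmul]

end Euler

section Separation

variable {K M : Type*} [Field K] [AddCommGroup M] [Module K M]

theorem eq_zero_of_ι_mul_map_eq_zero {V : Type*} [AddCommGroup V] [Module K V]
    {V₀ : Submodule K V} {v : V} (hv : v ∉ V₀) {x : ExteriorAlgebra K V₀}
    (h : ι K v * ExteriorAlgebra.map V₀.subtype x = 0) : x = 0 := by
  obtain ⟨φ, hφv, hφ⟩ := Submodule.exists_le_ker_of_notMem hv
  have hφ' : φ ∘ₗ V₀.subtype = 0 := LinearMap.ext fun w => hφ w.2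
  have key := CliffordAlgebra.contractLeft_ι_mul (d := φ) v (ExteriorAlgebra.map V₀.subtype x)
  simp only [h, contractLeft_map, hφ', map_zero, LinearMap.zero_apply, mul_zero, sub_zero] at key
  have hmap := (smul_eq_zero.mp key.symm).resolve_left hφv
  exact map_injective_field V₀.ker_subtype (hmap.trans (map_zero _).symm)

variable [FiniteDimensional K M]

theorem eq_zero_of_forall_contractLeft_eq_zero {k : ℕ} (hk : (k : K) ≠ 0) {x : ExteriorAlgebra K M}
    (hx : x ∈ ⋀[K]^k M) (h : ∀ φ : Module.Dual K M, φ⌋x = 0) : x = 0 := by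
  have euler := sum_ι_mul_contractLeft (Module.finBasis K M) hx
  simp only [h, mul_zero, Finset.sum_const_zero] at euler
  exact (smul_eq_zero.mp euler.symm).resolve_left hk

theorem eq_zero_of_forall_ι_mul_eq_zero {k : ℕ} (hk : (Module.finrank K M : K) ≠ k)
    {x : ExteriorAlgebra K M} (hx : x ∈ ⋀[K]^k M) (h : ∀ v : M, ι K v * x = 0) : x = 0 := by
  have euler := sum_contractLeft_ι_mul (Module.finBasis K M) hx
  simp only [h, map_zero, Finset.sum_const_zero, Fintype.card_fin] at euler
  exact (smul_eq_zero.mp euler.symm).resolve_left (sub_ne_zero.mpr hk)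

theorem exists_eq_smul_of_contractLeft_eq_zero {k : ℕ} (hM : Module.finrank K M = k + 1)
    {φ : Module.Dual K M} (hφ : φ ≠ 0) {x y : ExteriorAlgebra K M}
    (hx : x ∈ ⋀[K]^k M) (hy : y ∈ ⋀[K]^k M) (hφx : φ⌋x = 0) (hφy : φ⌋y = 0) (hx0 : x ≠ 0) :
    ∃ c : K, y = c • x := by
  obtain ⟨v, hv⟩ := LinearMap.surjective hφ 1
  have hline : Module.finrank K (⋀[K]^(k + 1) M) = 1 := by
    rw [exteriorPower.finrank_eq, hM, Nat.choose_self]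
  have hvx : ι K v * x ≠ 0 := fun h =>
    hx0 (by rw [eq_contractLeft_ι_mul hv hφx, h, map_zero])
  obtain ⟨c, hc⟩ := exists_smul_eq_of_finrank_eq_one hline
    (x := ⟨ι K v * x, ι_mul_mem v hx⟩) (Subtype.coe_ne_coe.mp hvx) ⟨ι K v * y, ι_mul_mem v hy⟩
  have hc' : c • (ι K v * x) = ι K v * y := congrArg Subtype.val hc
  refine ⟨c, ?_⟩
  rw [eq_contractLeft_ι_mul hv hφy, ← hc', map_smul, ← eq_contractLeft_ι_mul hv hφx]

end Separation

section AlternatingForm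

theorem det_eq_zero_of_transpose_eq_neg {R n : Type*} [CommRing R] [NoZeroDivisors R]
    [NeZero (2 : R)] [Fintype n] [DecidableEq n] (hn : Odd (Fintype.card n)) {A : Matrix n n R}
    (hA : A.transpose = -A) : A.det = 0 := by
  have h : A.det = -A.det :=
    calc A.det = A.transpose.det := A.det_transpose.symm
      _ = -A.det := by rw [hA, Matrix.det_neg, hn.neg_one_pow, neg_one_mul]
  have h2 : 2 * A.det = 0 := by linear_combination h
  exact (mul_eq_zero.mp h2).resolve_left two_ne_zero

theorem exists_ne_zero_and_apply_eq_zero_of_isAlt {K E : Type*} [Field K] [NeZero (2 : K)]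
    [AddCommGroup E] [Module K E] [FiniteDimensional K E] (hE : Odd (Module.finrank K E))
    {B : LinearMap.BilinForm K E} (hB : B.IsAlt) : ∃ v ≠ 0, B v = 0 := by
  let b := Module.finBasis K E
  have hdet : (LinearMap.BilinForm.toMatrix b B).det = 0 := by
    refine det_eq_zero_of_transpose_eq_neg (by rwa [Fintype.card_fin]) (Matrix.ext fun i j => ?_)
    simp only [Matrix.transpose_apply, Matrix.neg_apply, LinearMap.BilinForm.toMatrix_apply,
      hB.neg_eq]
  have hker : LinearMap.ker B ≠ ⊥ := fun h =>
    (LinearMap.BilinForm.nondegenerate_iff_det_ne_zero b).mp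
      (LinearMap.BilinForm.nondegenerate_iff_ker_eq_bot.mpr h) hdet
  obtain ⟨v, hv, hv0⟩ := Submodule.exists_mem_ne_zero_of_ne_bot hker
  exact ⟨v, hv0, hv⟩

end AlternatingForm

section Bivector

variable {R N : Type*} [CommRing R] [AddCommGroup N] [Module R N]

/-- A decomposable bivector, i.e. a product `u ∧ v` of two vectors. Zero is allowed. -/
def IsDecomposable (x : ExteriorAlgebra R N) : Prop :=
  ∃ u v : N, x = ι R u * ι R v

theorem IsDecomposable.mul_self_eq_zero {x : ExteriorAlgebra R N} (hx : IsDecomposable x) :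
    x * x = 0 := by
  obtain ⟨u, v, rfl⟩ := hx
  rw [mul_assoc, ← mul_assoc (ι R v), eq_neg_of_add_eq_zero_left (ι_add_mul_swap v u), neg_mul,
    mul_assoc, ι_sq_zero, mul_zero, neg_zero, mul_zero]

theorem exists_ι_eq_contractLeft (φ : Module.Dual R N) {x : ExteriorAlgebra R N}
    (hx : x ∈ ⋀[R]^2 N) : ∃ v : N, ι R v = φ⌋x := by
  have h := contractLeft_mem φ hx
  rwa [exteriorPower, pow_one] at h

theorem contractLeft_mul_self (φ : Module.Dual R N) {x : ExteriorAlgebra R N}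
    (hx : x ∈ ⋀[R]^2 N) : φ⌋(x * x) = (2 : R) • (φ⌋x * x) := by
  rw [contractLeft_mul_of_mem φ hx, (commute_of_mem_of_even even_two hx (φ⌋x)).eq,
    even_two.neg_one_pow, one_smul, two_smul]

variable {K M : Type*} [Field K] [AddCommGroup M] [Module K M]

theorem isDecomposable_of_ι_mul_eq_zero {v : M} (hv : v ≠ 0) {x : ExteriorAlgebra K M}
    (hx : x ∈ ⋀[K]^2 M) (h : ι K v * x = 0) : IsDecomposable x := by
  obtain ⟨φ, hφ⟩ := Module.Projective.exists_dual_eq_one K hv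
  obtain ⟨w, hw⟩ := exists_ι_eq_contractLeft φ hx
  exact ⟨v, w, hw ▸ eq_ι_mul_contractLeft hφ h⟩

variable [FiniteDimensional K M] [NeZero (2 : K)]

theorem isDecomposable_of_mul_self_eq_zero {x : ExteriorAlgebra K M} (hx : x ∈ ⋀[K]^2 M)
    (h : x * x = 0) : IsDecomposable x := by
  by_cases hx0 : x = 0
  · exact ⟨0, 0, by simp [hx0]⟩
  obtain ⟨φ, hφ⟩ : ∃ φ : Module.Dual K M, φ⌋x ≠ 0 := by
    contrapose! hx0
    exact eq_zero_of_forall_contractLeft_eq_zero (Nat.cast_ofNat.trans_ne two_ne_zero) hx hx0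
  obtain ⟨v, hv⟩ := exists_ι_eq_contractLeft φ hx
  have hvx : ι K v * x = 0 := by
    have leibniz := contractLeft_mul_self φ hx
    rw [h, map_zero, ← hv] at leibniz
    exact (smul_eq_zero.mp leibniz.symm).resolve_left two_ne_zero
  exact isDecomposable_of_ι_mul_eq_zero (fun hv0 => hφ (by rw [← hv, hv0, map_zero])) hx hvx

theorem exists_contractLeft_eq_zero (hM : Odd (Module.finrank K M)) {x : ExteriorAlgebra K M}
    (hx : x ∈ ⋀[K]^2 M) : ∃ φ : Module.Dual K M, φ ≠ 0 ∧ φ⌋x = 0 := by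
  let B : LinearMap.BilinForm K (Module.Dual K M) :=
    (CliffordAlgebra.contractLeft.flip ∘ₗ CliffordAlgebra.contractLeft.flip x).compr₂
      (algebraMapInv (R := K) (M := M)).toLinearMap
  have hB : B.IsAlt := fun φ =>
    (congrArg algebraMapInv (CliffordAlgebra.contractLeft_contractLeft φ x)).trans (map_zero _)
  obtain ⟨φ, hφ0, hφ⟩ :=
    exists_ne_zero_and_apply_eq_zero_of_isAlt (by rwa [Subspace.dual_finrank_eq]) hB
  refine ⟨φ, hφ0, eq_zero_of_forall_contractLeft_eq_zero (k := 1) (by simp)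
    (contractLeft_mem φ hx) fun ψ => ?_⟩
  obtain ⟨r, hr⟩ := Submodule.mem_one.mp (contractLeft_mem ψ (contractLeft_mem φ hx))
  have hr0 : algebraMapInv (ψ⌋(φ⌋x)) = 0 := LinearMap.congr_fun hφ ψ
  rw [← hr, algebraMap_leftInverse M r] at hr0
  rw [← hr, hr0, map_zero]

theorem exists_mul_self_eq_smul_mul_self (hM : Module.finrank K M = 5) {x y : ExteriorAlgebra K M}
    (hx : x ∈ ⋀[K]^2 M) (hy : y ∈ ⋀[K]^2 M) (hxy : x * y = 0) (hxx : x * x ≠ 0) :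
    ∃ c : K, y * y = c • (x * x) := by
  obtain ⟨φ, hφ0, hφx⟩ := exists_contractLeft_eq_zero (by rw [hM]; decide) hx
  obtain ⟨v, hv⟩ := exists_ι_eq_contractLeft φ hy
  have hvx : ι K v * x = 0 := by
    rw [← (commute_of_mem_of_even even_two hx _).eq, hv]
    simpa [hφx, hxy] using (contractLeft_mul_of_mem φ hx y).symm
  have hv0 : v = 0 := by
    by_contra hv0
    exact hxx (isDecomposable_of_ι_mul_eq_zero hv0 hx hvx).mul_self_eq_zero
  have hφy : φ⌋y = 0 := by rw [← hv, hv0, map_zero]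
  refine exists_eq_smul_of_contractLeft_eq_zero hM hφ0 (SetLike.mul_mem_graded hx hx)
    (SetLike.mul_mem_graded hy hy) ?_ ?_ hxx
  · rw [contractLeft_mul_self φ hx, hφx, zero_mul, smul_zero]
  · rw [contractLeft_mul_self φ hy, hφy, zero_mul, smul_zero]

theorem exists_isDecomposable_of_mul_eq_zero [IsAlgClosed K] (hM : Module.finrank K M = 5)
    {x y : ExteriorAlgebra K M} (hx : x ∈ ⋀[K]^2 M) (hy : y ∈ ⋀[K]^2 M) (hx0 : x ≠ 0) (hy0 : y ≠ 0)
    (hxy : x * y = 0) : ∃ a b : K, a • x + b • y ≠ 0 ∧ IsDecomposable (a • x + b • y) := by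
  by_cases hxx : x * x = 0
  · refine ⟨1, 0, ?_⟩
    rw [one_smul, zero_smul, add_zero]
    exact ⟨hx0, isDecomposable_of_mul_self_eq_zero hx hxx⟩
  obtain ⟨c, hc⟩ := exists_mul_self_eq_smul_mul_self hM hx hy hxy hxx
  obtain ⟨d, hd⟩ := IsAlgClosed.exists_pow_nat_eq (-c) two_pos
  have hyx : y * x = 0 := by rw [← (commute_of_mem_of_even even_two hx y).eq, hxy]
  refine ⟨d, 1, fun h => ?_, isDecomposable_of_mul_self_eq_zero
    (add_mem (Submodule.smul_mem _ _ hx) (Submodule.smul_mem _ _ hy)) ?_⟩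
  · have hdxx : d • (x * x) = 0 := by
      simpa [mul_add, hxy] using congrArg (x * ·) h
    have hd0 : d = 0 := (smul_eq_zero.mp hdxx).resolve_right hxx
    exact hy0 (by simpa [hd0] using h)
  · calc (d • x + (1 : K) • y) * (d • x + (1 : K) • y) = d ^ 2 • (x * x) + y * y := by
          simp only [one_smul, add_mul, mul_add, smul_mul_assoc, mul_smul_comm, hxy, hyx, smul_zero,
            add_zero, zero_add, smul_smul, sq]
      _ = 0 := by rw [hd, hc, neg_smul, neg_add_cancel]

end Bivector

section BilinearForm

variable {K : Type*} [Field K] [IsAlgClosed K]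

theorem exists_binary_quadratic_factorization (r s t : K) :
    ∃ m n m' n' : K, r = m * m' ∧ s = m * n' + n * m' ∧ t = n * n' := by
  by_cases hr : r = 0
  · exact ⟨0, 1, s, t, by simp [hr], by simp, by simp⟩
  obtain ⟨z, hz⟩ := IsAlgClosed.exists_root
    (Polynomial.C r * Polynomial.X ^ 2 + Polynomial.C s * Polynomial.X + Polynomial.C t)
    (by rw [Polynomial.degree_quadratic hr]; exact two_ne_zero)
  have hz' : r * z ^ 2 + s * z + t = 0 := by simpa [Polynomial.IsRoot] using hz
  exact ⟨1, -z, r, s + r * z, by ring, by ring, by linear_combination hz'⟩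

theorem exists_forall_isSymm_apply_eq_of_fin_two
    (f : Module.Dual K (LinearMap.BilinForm K (Fin 2 → K))) :
    ∃ p q, ∀ B : LinearMap.BilinForm K (Fin 2 → K), B.IsSymm → f B = B p q := by
  let e (i j : Fin 2) : LinearMap.BilinForm K (Fin 2 → K) := Matrix.toBilin' (Matrix.single i j 1)
  obtain ⟨m, n, m', n', hr, hs, ht⟩ :=
    exists_binary_quadratic_factorization (f (e 0 0)) (f (e 0 1) + f (e 1 0)) (f (e 1 1))
  refine ⟨![m, n], ![m', n'], fun B hB => ?_⟩
  obtain ⟨A, rfl⟩ := Matrix.toBilin'.surjective B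
  have hA : A 1 0 = A 0 1 := by simpa using hB.eq (Pi.single 1 1) (Pi.single 0 1)
  have expand : Matrix.toBilin' A = ∑ i, ∑ j, A i j • e i j := by
    conv_lhs => rw [A.matrix_eq_sum_single]
    simp only [e, map_sum, ← map_smul, Matrix.smul_single, smul_eq_mul, mul_one]
  have hB_apply : Matrix.toBilin' A ![m, n] ![m', n'] =
      A 0 0 * (m * m') + A 0 1 * (m * n' + n * m') + A 1 1 * (n * n') := by
    simp only [Matrix.toBilin'_apply, Fin.sum_univ_two, Matrix.cons_val_zero,
      Matrix.cons_val_one, hA]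
    ring
  rw [hB_apply, ← hr, ← hs, ← ht, expand]
  simp only [Fin.sum_univ_two, map_add, map_smul, smul_eq_mul, hA]
  ring

variable {E : Type*} [AddCommGroup E] [Module K E] [FiniteDimensional K E]

theorem exists_forall_isSymm_apply_eq (hE : Module.finrank K E ≤ 2)
    (f : Module.Dual K (LinearMap.BilinForm K E)) :
    ∃ p q, ∀ B : LinearMap.BilinForm K E, B.IsSymm → f B = B p q := by
  obtain ⟨g, hg⟩ : ∃ g : (Fin 2 → K) →ₗ[K] E, Function.Surjective g :=
    ⟨(Module.finBasis K E).equivFun.symm ∘ₗ LinearMap.funLeft K K (Fin.castLE hE),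
      (Module.finBasis K E).equivFun.symm.surjective.comp
        (LinearMap.funLeft_surjective_of_injective K K _ (Fin.castLE_injective hE))⟩
  let pullback : LinearMap.BilinForm K E →ₗ[K] LinearMap.BilinForm K (Fin 2 → K) :=
    { toFun := fun B => B.comp g g, map_add' := fun _ _ => rfl, map_smul' := fun _ _ => rfl }
  have hpullback : Function.Injective pullback := fun B B' =>
    (LinearMap.BilinForm.comp_inj B B' hg hg).mp
  obtain ⟨f', hf'⟩ :=
    LinearMap.dualMap_surjective_of_injective (V₁ := LinearMap.BilinForm K E)
      (V₂ := LinearMap.BilinForm K (Fin 2 → K)) hpullback f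
  obtain ⟨p, q, hpq⟩ := exists_forall_isSymm_apply_eq_of_fin_two f'
  refine ⟨g p, g q, fun B hB => ?_⟩
  calc f B = f' (pullback B) := by rw [← hf']; rfl
    _ = B (g p) (g q) := hpq _ ⟨fun v w => hB.eq _ _⟩

theorem exists_apply_eq_of_forall_exists_apply_ne_zero {T : Type*} [AddCommGroup T] [Module K T]
    (hE : Module.finrank K E ≤ 2) {Q : T →ₗ[K] LinearMap.BilinForm K E} (hQ : ∀ τ, (Q τ).IsSymm)
    (h : ∀ p q, p ≠ 0 → q ≠ 0 → ∃ τ, Q τ p q ≠ 0) {B : LinearMap.BilinForm K E} (hB : B.IsSymm) :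
    ∃ τ, Q τ = B := by
  rw [← LinearMap.mem_range]
  by_contra hB_range
  obtain ⟨f, hfB, hf⟩ := Submodule.exists_le_ker_of_notMem (V := LinearMap.BilinForm K E) hB_range
  obtain ⟨p, q, hpq⟩ := exists_forall_isSymm_apply_eq hE f
  rw [hpq B hB] at hfB
  obtain ⟨τ, hτ⟩ := h p q (by rintro rfl; simp at hfB) (by rintro rfl; simp at hfB)
  exact hτ ((hpq (Q τ) (hQ τ)).symm.trans (hf ⟨τ, rfl⟩))

end BilinearForm

section ContractedVolume

variable {R V : Type*} [CommRing R] [AddCommGroup V] [Module R V]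

theorem map_exteriorPower_le {M : Type*} [AddCommGroup M] [Module R M] (f : M →ₗ[R] V) (k : ℕ) :
    (⋀[R]^k M).map (ExteriorAlgebra.map f).toLinearMap ≤ ⋀[R]^k V := by
  have hrange : (LinearMap.range (ι R)).map (ExteriorAlgebra.map f).toLinearMap ≤
      LinearMap.range (ι R : V →ₗ[R] ExteriorAlgebra R V) := by
    rintro _ ⟨_, ⟨u, rfl⟩, rfl⟩
    exact ⟨f u, (map_apply_ι f u).symm⟩
  rw [exteriorPower, Submodule.map_pow]
  exact pow_le_pow_left' hrange k

/-- The family of bilinear forms `(α, β) ↦ vol (v₀ ∧ τ ∧ α ∧ β)` on `W`, for `τ ∈ V₀`. The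
functional `vol` is taken on the whole exterior algebra. -/
noncomputable def contractedVolume (vol : Module.Dual R (ExteriorAlgebra R V)) (v₀ : V)
    (V₀ : Submodule R V) (W : Submodule R (ExteriorAlgebra R V)) :
    V₀ →ₗ[R] LinearMap.BilinForm R W where
  toFun τ := ((LinearMap.mul R (ExteriorAlgebra R V)).compl₁₂ W.subtype W.subtype).compr₂
    (vol ∘ₗ LinearMap.mulLeft R (ι R v₀) ∘ₗ LinearMap.mulLeft R (ι R (τ : V)))
  map_add' τ τ' := by ext; simp [add_mul, mul_add]
  map_smul' c τ := by ext; simp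

theorem contractedVolume_apply (vol : Module.Dual R (ExteriorAlgebra R V)) (v₀ : V)
    (V₀ : Submodule R V) (W : Submodule R (ExteriorAlgebra R V)) (τ : V₀) (α β : W) :
    contractedVolume vol v₀ V₀ W τ α β =
      vol (ι R v₀ * (ι R (τ : V) * ((α : ExteriorAlgebra R V) * (β : ExteriorAlgebra R V)))) :=
  rfl

theorem isSymm_contractedVolume (vol : Module.Dual R (ExteriorAlgebra R V)) (v₀ : V)
    (V₀ : Submodule R V) {W : Submodule R (ExteriorAlgebra R V)} (hW : W ≤ ⋀[R]^2 V) (τ : V₀) :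
    (contractedVolume vol v₀ V₀ W τ).IsSymm :=
  ⟨fun α β => by
    rw [contractedVolume_apply, (commute_of_mem_of_even even_two (hW α.2) β.1).eq]
    rfl⟩

end ContractedVolume

section Main

variable {K V : Type*} [Field K] [AddCommGroup V] [Module K V]
  {vol : Module.Dual K (ExteriorAlgebra K V)} {v₀ : V} {V₀ : Submodule K V}
  {W : Submodule K (ExteriorAlgebra K V)}

theorem exists_vol_ι_mul_ι_mul_map_ne_zero [FiniteDimensional K V₀] (hv₀ : v₀ ∉ V₀) {k : ℕ}
    (hvol : Function.Injective fun x : ⋀[K]^(k + 2) V => vol x)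
    (hk : (Module.finrank K V₀ : K) ≠ k) {x : ExteriorAlgebra K V₀} (hx : x ∈ ⋀[K]^k V₀)
    (hx0 : x ≠ 0) :
    ∃ τ : V₀, vol (ι K v₀ * (ι K (τ : V) * ExteriorAlgebra.map V₀.subtype x)) ≠ 0 := by
  contrapose! hx0
  refine eq_zero_of_forall_ι_mul_eq_zero hk hx fun τ => eq_zero_of_ι_mul_map_eq_zero hv₀ ?_
  have hmem : ι K v₀ * (ι K (τ : V) * ExteriorAlgebra.map V₀.subtype x) ∈ ⋀[K]^(k + 2) V :=
    ι_mul_mem v₀ (ι_mul_mem _ (map_exteriorPower_le V₀.subtype k (Submodule.mem_map_of_mem hx)))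
  rw [map_mul, map_apply_ι, Submodule.subtype_apply]
  exact congrArg Subtype.val (@hvol ⟨_, hmem⟩ 0 ((hx0 τ).trans (map_zero vol).symm))

theorem mul_self_ne_zero_of_forall_exists_contractedVolume_eq
    (h : ∀ B : LinearMap.BilinForm K W, B.IsSymm → ∃ τ, contractedVolume vol v₀ V₀ W τ = B)
    {x : ExteriorAlgebra K V} (hx : x ∈ W) (hx0 : x ≠ 0) : x * x ≠ 0 := by
  obtain ⟨f, hf⟩ := Module.Projective.exists_dual_eq_one K
    (show (⟨x, hx⟩ : W) ≠ 0 from Subtype.coe_ne_coe.mp hx0)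
  obtain ⟨τ, hτ⟩ := h (LinearMap.smulRight f f) ⟨fun α β => mul_comm (f α) (f β)⟩
  have hvol : vol (ι K v₀ * (ι K (τ : V) * (x * x))) = f ⟨x, hx⟩ • f ⟨x, hx⟩ :=
    LinearMap.congr_fun₂ hτ ⟨x, hx⟩ ⟨x, hx⟩
  intro hxx
  simp [hxx, hf] at hvol

variable [IsAlgClosed K] [NeZero (2 : K)]

theorem exists_contractedVolume_apply_ne_zero
    (hvol : Function.Injective fun x : ⋀[K]^6 V => vol x) (hv₀ : v₀ ∉ V₀)
    (hV₀ : Module.finrank K V₀ = 5)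
    (hW : W ≤ (⋀[K]^2 V₀).map (ExteriorAlgebra.map V₀.subtype).toLinearMap)
    (h : ∀ x ∈ W, (∃ u ∈ V₀, ∃ u' ∈ V₀, x = ι K u * ι K u') → x = 0) {p q : W}
    (hp0 : p ≠ 0) (hq0 : q ≠ 0) : ∃ τ, contractedVolume vol v₀ V₀ W τ p q ≠ 0 := by
  have : FiniteDimensional K V₀ := Module.finite_of_finrank_pos (by rw [hV₀]; decide)
  obtain ⟨⟨p, hp⟩, q, hq⟩ := p, q
  obtain ⟨x, hx, rfl⟩ := hW hp
  obtain ⟨y, hy, rfl⟩ := hW hq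
  have hx0 : x ≠ 0 := by rintro rfl; simp at hp0
  have hy0 : y ≠ 0 := by rintro rfl; simp at hq0
  have hxy : x * y ≠ 0 := fun hxy => by
    obtain ⟨a, b, hne, u, u', hu⟩ := exists_isDecomposable_of_mul_eq_zero hV₀ hx hy hx0 hy0 hxy
    refine hne (map_injective_field V₀.ker_subtype ?_)
    rw [map_zero]
    refine h _ ?_ ⟨u, u.2, u', u'.2, by rw [hu, map_mul, map_apply_ι, map_apply_ι]; rfl⟩
    rw [map_add, map_smul, map_smul]
    exact add_mem (W.smul_mem a hp) (W.smul_mem b hq)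
  have h54 : ((5 : ℕ) : K) ≠ (4 : ℕ) := fun h => by
    have : (1 : K) = 0 := by linear_combination h
    exact one_ne_zero this
  obtain ⟨τ, hτ⟩ := exists_vol_ι_mul_ι_mul_map_ne_zero hv₀ hvol (hV₀ ▸ h54)
    (SetLike.mul_mem_graded hx hy) hxy
  exact ⟨τ, by rwa [map_mul (ExteriorAlgebra.map V₀.subtype)] at hτ⟩

theorem stmt6_general (hvol : Function.Injective fun x : ⋀[K]^6 V => vol x) (hv₀ : v₀ ∉ V₀)
    (hV₀ : Module.finrank K V₀ = 5)
    (hW : W ≤ (⋀[K]^2 V₀).map (ExteriorAlgebra.map V₀.subtype).toLinearMap)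
    (hdim : Module.finrank K W ≤ 2) :
    (∀ B : W →ₗ[K] W →ₗ[K] K, (∀ α β, B α β = B β α) →
      ∃ τ ∈ V₀, ∀ α β : W, B α β = vol (ι K v₀ * (ι K τ *
        ((α : ExteriorAlgebra K V) * (β : ExteriorAlgebra K V))))) ↔
    (∀ x ∈ W, (∃ u ∈ V₀, ∃ u' ∈ V₀, x = ι K u * ι K u') → x = 0) := by
  constructor
  · rintro h x hx ⟨u, -, u', -, hu⟩
    have hsurj (B : LinearMap.BilinForm K W) (hB : B.IsSymm) :
        ∃ τ, contractedVolume vol v₀ V₀ W τ = B := by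
      obtain ⟨τ, hτ, hBτ⟩ := h B hB.eq
      exact ⟨⟨τ, hτ⟩, LinearMap.ext₂ fun α β => (hBτ α β).symm⟩
    by_contra hx0
    exact mul_self_ne_zero_of_forall_exists_contractedVolume_eq hsurj hx hx0
      (IsDecomposable.mul_self_eq_zero ⟨u, u', hu⟩)
  · intro h B hB
    have : FiniteDimensional K V₀ := Module.finite_of_finrank_pos (by rw [hV₀]; decide)
    have : FiniteDimensional K W := Submodule.finiteDimensional_of_le hW
    obtain ⟨τ, rfl⟩ := exists_apply_eq_of_forall_exists_apply_ne_zero hdim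
      (isSymm_contractedVolume vol v₀ V₀ (hW.trans (map_exteriorPower_le _ _)))
      (fun p q => exists_contractedVolume_apply_ne_zero hvol hv₀ hV₀ hW h) ⟨hB⟩
    exact ⟨τ, τ.2, fun α β => rfl⟩

end Main

/-- Let `v₀ ≠ 0`, let `V₀` be a 5-dimensional complement of `ℂv₀` and
`W ⊆ ⋀²V₀` a subspace of dimension ≤ 2. The linear map sending `τ ∈ V₀` to the
symmetric bilinear form `b_τ(α,β) = vol(v₀∧τ∧α∧β)` on `W` is surjective onto the
space of symmetric bilinear forms on `W` if and only if `W` contains no nonzero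
decomposable element `u∧u'` with `u, u' ∈ V₀`. -/
theorem stmt6 (V : Type*) [AddCommGroup V] [Module ℂ V] [FiniteDimensional ℂ V]
    (hV : Module.finrank ℂ V = 6)
    (vol : ExteriorAlgebra ℂ V →ₗ[ℂ] ℂ)
    (hvol : Function.Bijective fun x : ⋀[ℂ]^6 V => vol x)
    (v₀ : V) (hv₀ : v₀ ≠ 0)
    (V₀ : Submodule ℂ V) (hV₀ : Module.finrank ℂ V₀ = 5)
    (hcompl : IsCompl (ℂ ∙ v₀) V₀)
    (W : Submodule ℂ (ExteriorAlgebra ℂ V)) (hW : W ≤ extSub V₀ 2)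
    (hdim : Module.finrank ℂ W ≤ 2) :
    (∀ B : ↥W →ₗ[ℂ] ↥W →ₗ[ℂ] ℂ, (∀ α β, B α β = B β α) →
      ∃ τ ∈ V₀, ∀ α β : ↥W,
        B α β = vol (ι ℂ v₀ * (ι ℂ τ *
          ((α : ExteriorAlgebra ℂ V) * (β : ExteriorAlgebra ℂ V))))) ↔
    (∀ x ∈ W, (∃ u ∈ V₀, ∃ u' ∈ V₀, x = ι ℂ u * ι ℂ u') → x = 0) :=
  stmt6_general hvol.1 (fun h => hv₀ (Submodule.disjoint_def.mp hcompl.disjoint v₀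
    (Submodule.mem_span_singleton_self v₀) h)) hV₀ hW hdim
end

section
/- Let V be 6-dimensional over ℂ with vol : ⋀⁶V → ℂ a linear isomorphism, and let σ be the symplectic form on ⋀³V given by σ(α,β) = vol(α∧β). Let ω₀ ∈ ⋀⁶V be the element with vol(ω₀) = 1, and define the bilinear form σ^∨ on ⋀³(V^∨) by σ^∨(ψ,χ) = ⟨ψ∧χ, ω₀⟩, where ⟨·,·⟩ : ⋀⁶(V^∨) × ⋀⁶V → ℂ is the canonical determinant pairing. If A ⊆ ⋀³V is a Lagrangian subspace of (⋀³V, σ), then its annihilator A^⊥ := {ψ ∈ ⋀³(V^∨) : ⟨ψ, a⟩ = 0 for all a ∈ A} (with respect to the canonical pairing ⋀³(V^∨) × ⋀³V → ℂ) is a Lagrangian subspace of (⋀³(V^∨), σ^∨). -/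
open ExteriorAlgebra

/-! Fix a basis `b` of `V` and let `⋆ : ⋀ⁿV → ⋀ⁿ(V^∨)` be its combinatorial Hodge star, which sends
`b_s` to `± b^∨_{sᶜ}`. The top exterior powers of `V` and `V^∨` are lines, so both
`vol (x ∧ y)` and `φ (⋆x ∧ ⋆y)`, for any functional `φ` on `⋀²ⁿ(V^∨)`, are scalar multiples of
`⟨⋆x, y⟩`; the first scalar is nonzero because `vol` is. Hence `⋆` carries a Lagrangian `A` into its
annihilator, onto it by dimension, and the annihilator `⋆A` is isotropic because `A` is. -/

open Module Set.powersetCard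

section WedgeForm

variable {R M : Type*} [CommRing R] [AddCommGroup M] [Module R M]

/-- The bilinear form `(x, y) ↦ φ (x ∧ y)` on `⋀ᵏM × ⋀ˡM` attached to a linear functional `φ` on the
exterior algebra. With `φ = vol` it is the form `σ`, with `φ = ⟨·, ω₀⟩` it is `σ^∨`. -/
def wedgeForm (φ : ExteriorAlgebra R M →ₗ[R] R) (k l : ℕ) : ⋀[R]^k M →ₗ[R] ⋀[R]^l M →ₗ[R] R :=
  ((LinearMap.mul R (ExteriorAlgebra R M)).compr₂ φ).compl₁₂
    (Submodule.subtype (⋀[R]^k M)) (Submodule.subtype (⋀[R]^l M))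

lemma wedgeForm_apply (φ : ExteriorAlgebra R M →ₗ[R] R) {k l : ℕ} (x : ⋀[R]^k M) (y : ⋀[R]^l M) :
    wedgeForm φ k l x y = φ (x * y) :=
  rfl

/-- `p` restricts to the determinant pairing of decomposable `k`-vectors of `M^∨` and `M`. Nothing
is required of its values in other degrees. -/
def IsDetPairing (k : ℕ)
    (p : ExteriorAlgebra R (Dual R M) →ₗ[R] ExteriorAlgebra R M →ₗ[R] R) : Prop :=
  ∀ (f : Fin k → Dual R M) (v : Fin k → M),
    p ((List.ofFn fun i => ι R (f i)).prod) ((List.ofFn fun i => ι R (v i)).prod) =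
      Matrix.det (Matrix.of fun i j => f i (v j))

lemma IsDetPairing.eq_pairingDual {k : ℕ}
    {p : ExteriorAlgebra R (Dual R M) →ₗ[R] ExteriorAlgebra R M →ₗ[R] R} (hp : IsDetPairing k p)
    (ψ : ⋀[R]^k (Dual R M)) (x : ⋀[R]^k M) : p ψ x = exteriorPower.pairingDual R M k ψ x := by
  suffices h : p.compl₁₂ (Submodule.subtype (⋀[R]^k (Dual R M))) (Submodule.subtype (⋀[R]^k M)) =
      exteriorPower.pairingDual R M k from
    LinearMap.congr_fun₂ h ψ x
  ext f v
  exact (hp f v).trans <| (Matrix.det_transpose _).symm.trans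
    (exteriorPower.pairingDual_ιMulti_ιMulti f v).symm

end WedgeForm

section TopDegree

variable {R M I : Type*} [CommRing R] [AddCommGroup M] [Module R M] [Fintype I]

lemma powersetCard_eq_of_eq_card {n : ℕ} (hn : n = Fintype.card I) (s t : Set.powersetCard I n) :
    s = t := by
  have eq_univ (r : Set.powersetCard I n) : (r : Finset I) = Finset.univ :=
    (Finset.card_eq_iff_eq_univ _).1 ((card_eq r).trans hn)
  exact Subtype.ext ((eq_univ s).trans (eq_univ t).symm)

lemma map_basis_top_ne_zero [LinearOrder I] {n : ℕ} (hn : n = Fintype.card I) (b : Basis I R M)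
    {φ : ExteriorAlgebra R M →ₗ[R] R} {ω : ExteriorAlgebra R M} (hω : ω ∈ ⋀[R]^n M) (hφ : φ ω ≠ 0)
    (u : Set.powersetCard I n) : φ (b.exteriorPower n u) ≠ 0 := by
  intro hu
  have hφ_top : φ ∘ₗ Submodule.subtype (⋀[R]^n M) = 0 :=
    (b.exteriorPower n).ext fun s => by
      rw [powersetCard_eq_of_eq_card hn s u]
      exact hu
  exact hφ (LinearMap.congr_fun hφ_top ⟨ω, hω⟩)

end TopDegree

section PairingDual

variable {R M I : Type*} [CommRing R] [AddCommGroup M] [Module R M] [LinearOrder I] [Finite I]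

lemma pairingDual_basis (b : Basis I R M) {k : ℕ} (s t : Set.powersetCard I k) :
    exteriorPower.pairingDual R M k (b.dualBasis.exteriorPower k s) (b.exteriorPower k t) =
      if s = t then 1 else 0 := by
  have coord_eq : exteriorPower.pairingDual R M k (b.dualBasis.exteriorPower k s) =
      (b.exteriorPower k).coord s := by
    rw [exteriorPower.basis_apply, Basis.coe_dualBasis, exteriorPower.basis_coord]
    rfl
  rw [coord_eq, Basis.coord_apply, Basis.repr_self, Finsupp.single_apply]
  simp only [eq_comm]

lemma pairingDual_bijective (b : Basis I R M) (k : ℕ) :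
    Function.Bijective (exteriorPower.pairingDual R M k) := by
  let e := (b.dualBasis.exteriorPower k).equiv (b.exteriorPower k).dualBasis (Equiv.refl _)
  suffices h : exteriorPower.pairingDual R M k = e.toLinearMap from h ▸ e.bijective
  refine (b.dualBasis.exteriorPower k).ext fun s => (b.exteriorPower k).ext fun t => ?_
  simp only [pairingDual_basis, e, LinearEquiv.coe_coe, Basis.equiv_apply, Equiv.refl_apply,
    Basis.dualBasis_apply_self, eq_comm]

end PairingDual

section HodgeStar

variable {R M I : Type*} [CommRing R] [AddCommGroup M] [Module R M] [LinearOrder I] [Fintype I]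
  {k l : ℕ}

lemma disjoint_powersetCard_compl (hI : l + k = Fintype.card I) (s : Set.powersetCard I k) :
    Disjoint s.val (compl hI s).val :=
  disjoint_compl_right

/-- The sign of the permutation sorting the elements of `s` followed by those of `sᶜ`. It relates
`b_s ∧ b_{sᶜ}` to the wedge product of the whole ordered basis `b`. -/
def shuffleSign (hI : l + k = Fintype.card I) (s : Set.powersetCard I k) : ℤˣ :=
  (permOfDisjoint (disjoint_powersetCard_compl hI s)).sign

lemma wedgeForm_basis (hI : l + k = Fintype.card I) (b : Basis I R M)
    (φ : ExteriorAlgebra R M →ₗ[R] R) (u : Set.powersetCard I (k + l))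
    (s : Set.powersetCard I k) (t : Set.powersetCard I l) :
    wedgeForm φ k l (b.exteriorPower k s) (b.exteriorPower l t) =
      if compl hI s = t then shuffleSign hI s • φ (b.exteriorPower (k + l) u) else 0 := by
  simp only [wedgeForm_apply, exteriorPower.basis_apply, exteriorPower.ιMulti_family_apply_coe]
  split_ifs with hst
  · subst hst
    rw [ιMulti_family_mul_of_disjoint _ _ _ _ (disjoint_powersetCard_compl hI s),
      powersetCard_eq_of_eq_card ((k.add_comm l).trans hI) (disjUnion _) u]
    exact map_zsmul φ _ _
  · have not_disjoint : ¬Disjoint s.val t.val := fun h =>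
      hst (eq_iff_subset.2 (le_compl_iff_disjoint_left.2 h)).symm
    rw [ιMulti_family_mul_of_not_disjoint _ _ _ _ not_disjoint, map_zero]

/-- The combinatorial Hodge star `⋀ᵏM ≃ ⋀ˡ(M^∨)` of an ordered basis `b` of a module of rank
`k + l`: it sends `b_s` to `± b^∨_{sᶜ}`, signed so that `⟨⋆x, y⟩` is the coefficient of `x ∧ y`. -/
noncomputable def hodgeStar (hI : l + k = Fintype.card I) (b : Basis I R M) :
    ⋀[R]^k M ≃ₗ[R] ⋀[R]^l (Dual R M) :=
  (b.exteriorPower k).equiv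
    (((b.dualBasis.exteriorPower l).reindex (compl hI).symm).unitsSMul fun s =>
      Units.map (Int.castRingHom R).toMonoidHom (shuffleSign hI s))
    (Equiv.refl _)

lemma hodgeStar_basis (hI : l + k = Fintype.card I) (b : Basis I R M) (s : Set.powersetCard I k) :
    hodgeStar hI b (b.exteriorPower k s) =
      shuffleSign hI s • b.dualBasis.exteriorPower l (compl hI s) := by
  simp only [hodgeStar, Basis.equiv_apply, Equiv.refl_apply, Basis.unitsSMul_apply,
    Basis.reindex_apply, Equiv.symm_symm, Units.smul_def]
  exact Int.cast_smul_eq_zsmul R _ _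

lemma wedgeForm_eq_pairingDual_hodgeStar (hI : l + k = Fintype.card I) (b : Basis I R M)
    (φ : ExteriorAlgebra R M →ₗ[R] R) (u : Set.powersetCard I (k + l))
    (x : ⋀[R]^k M) (y : ⋀[R]^l M) :
    wedgeForm φ k l x y =
      φ (b.exteriorPower (k + l) u) * exteriorPower.pairingDual R M l (hodgeStar hI b x) y := by
  suffices h : wedgeForm φ k l = φ (b.exteriorPower (k + l) u) •
      exteriorPower.pairingDual R M l ∘ₗ (hodgeStar hI b).toLinearMap from
    LinearMap.congr_fun₂ h x y
  refine (b.exteriorPower k).ext fun s => (b.exteriorPower l).ext fun t => ?_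
  rw [wedgeForm_basis hI b φ u]
  simp only [LinearMap.smul_apply, LinearMap.comp_apply, LinearEquiv.coe_coe, hodgeStar_basis,
    Units.smul_def, map_zsmul, pairingDual_basis]
  split_ifs <;> simp only [smul_eq_mul, mul_smul_comm, mul_one, smul_zero, mul_zero]

lemma wedgeForm_hodgeStar (hI : l + k = Fintype.card I) (b : Basis I R M)
    (φ : ExteriorAlgebra R (Dual R M) →ₗ[R] R) (u : Set.powersetCard I (l + k))
    (x : ⋀[R]^k M) (y : ⋀[R]^l M) :
    wedgeForm φ l k (hodgeStar hI b x) (hodgeStar ((k.add_comm l).trans hI) b y) =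
      φ (b.dualBasis.exteriorPower (l + k) u) *
        exteriorPower.pairingDual R M l (hodgeStar hI b x) y := by
  suffices h : (wedgeForm φ l k).compl₁₂ (hodgeStar hI b).toLinearMap
      (hodgeStar ((k.add_comm l).trans hI) b).toLinearMap =
      φ (b.dualBasis.exteriorPower (l + k) u) •
        exteriorPower.pairingDual R M l ∘ₗ (hodgeStar hI b).toLinearMap from
    LinearMap.congr_fun₂ h x y
  refine (b.exteriorPower k).ext fun s => (b.exteriorPower l).ext fun t => ?_
  simp only [LinearMap.compl₁₂_apply, LinearMap.smul_apply, LinearMap.comp_apply,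
    LinearEquiv.coe_coe, hodgeStar_basis, Units.smul_def, map_zsmul, pairingDual_basis,
    wedgeForm_basis ((k.add_comm l).trans hI) b.dualBasis φ u, EmbeddingLike.apply_eq_iff_eq]
  split_ifs with hst
  · subst hst
    simp only [smul_eq_mul, mul_one, mul_smul_comm, ← Units.smul_def, smul_smul]
    rw [mul_left_comm, Int.units_mul_self, mul_one]
  · simp only [smul_zero]

end HodgeStar

section Lagrangian

variable {K : Type*} [Field K]

lemma map_eq_comap_dualAnnihilator {X Y : Type*} [AddCommGroup X] [Module K X]
    [FiniteDimensional K X] [AddCommGroup Y] [Module K Y] {P : Y →ₗ[K] Dual K X}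
    (hP : Function.Injective P) (e : X ≃ₗ[K] Y) {A : Submodule K X}
    (hA : 2 * finrank K A = finrank K X) (hAe : ∀ x ∈ A, ∀ y ∈ A, P (e x) y = 0) :
    A.map e.toLinearMap = A.dualAnnihilator.comap P := by
  have : FiniteDimensional K Y := e.finiteDimensional
  refine Submodule.eq_of_le_of_finrank_le ?_ ?_
  · rintro _ ⟨x, hx, rfl⟩
    exact (Submodule.mem_dualAnnihilator _).2 (hAe x hx)
  · calc finrank K (A.dualAnnihilator.comap P)
        = finrank K ((A.dualAnnihilator.comap P).map P) :=
          (Submodule.equivMapOfInjective P hP _).finrank_eq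
      _ ≤ finrank K A.dualAnnihilator := Submodule.finrank_mono (Submodule.map_comap_le P _)
      _ = finrank K A := by
          have := Subspace.finrank_add_finrank_dualAnnihilator_eq A
          lia
      _ = finrank K (A.map e.toLinearMap) := (LinearEquiv.finrank_map_eq e A).symm

variable {V : Type*} [AddCommGroup V] [Module K V] {n : ℕ}

/-- `A` is a Lagrangian subspace of `⋀ⁿV` for the form `(x, y) ↦ φ (x ∧ y)`: it is totally
isotropic and has half the dimension. Subspaces of `⋀ⁿV` are encoded as subspaces of the exterior
algebra, and nondegeneracy of the form is not part of the definition. -/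
structure IsLagrangian (n : ℕ) (φ : ExteriorAlgebra K V →ₗ[K] K)
    (A : Submodule K (ExteriorAlgebra K V)) : Prop where
  le : A ≤ ⋀[K]^n V
  two_mul_finrank : 2 * finrank K A = finrank K (⋀[K]^n V)
  isotropic : ∀ x ∈ A, ∀ y ∈ A, φ (x * y) = 0

lemma IsDetPairing.annihilator_eq_map
    {p : ExteriorAlgebra K (Dual K V) →ₗ[K] ExteriorAlgebra K V →ₗ[K] K} (hp : IsDetPairing n p)
    {A : Submodule K (ExteriorAlgebra K V)} (hA : A ≤ ⋀[K]^n V) :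
    ⋀[K]^n (Dual K V) ⊓ ⨅ a ∈ A, LinearMap.ker (p.flip a) =
      ((A.submoduleOf (⋀[K]^n V)).dualAnnihilator.comap (exteriorPower.pairingDual K V n)).map
        (Submodule.subtype (⋀[K]^n (Dual K V))) := by
  ext ψ
  simp only [Submodule.mem_inf, Submodule.mem_iInf, LinearMap.mem_ker, LinearMap.flip_apply,
    Submodule.mem_map, Submodule.mem_comap, Submodule.mem_dualAnnihilator]
  constructor
  · rintro ⟨hψ, hψA⟩
    exact ⟨⟨ψ, hψ⟩, fun a ha => (hp.eq_pairingDual ⟨ψ, hψ⟩ a).symm.trans (hψA a ha), rfl⟩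
  · rintro ⟨ψ, hψA, rfl⟩
    exact ⟨ψ.2, fun a ha => (hp.eq_pairingDual ψ ⟨a, hA ha⟩).trans (hψA ⟨a, hA ha⟩ ha)⟩

theorem stmt14_general [FiniteDimensional K V] (hV : finrank K V = n + n)
    {vol : ExteriorAlgebra K V →ₗ[K] K} {ω : ExteriorAlgebra K V} (hω : ω ∈ ⋀[K]^(n + n) V)
    (hvol : vol ω ≠ 0) (φ : ExteriorAlgebra K (Dual K V) →ₗ[K] K)
    {p : ExteriorAlgebra K (Dual K V) →ₗ[K] ExteriorAlgebra K V →ₗ[K] K} (hp : IsDetPairing n p)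
    {A : Submodule K (ExteriorAlgebra K V)} (hA : IsLagrangian n vol A) :
    IsLagrangian n φ (⋀[K]^n (Dual K V) ⊓ ⨅ a ∈ A, LinearMap.ker (p.flip a)) := by
  let b : Basis (Fin (n + n)) K V := finBasisOfFinrankEq K V hV
  have hI : n + n = Fintype.card (Fin (n + n)) := (Fintype.card_fin _).symm
  let u : Set.powersetCard (Fin (n + n)) (n + n) := ⟨Finset.univ, Finset.card_univ.trans hI.symm⟩
  let hodge := hodgeStar hI b
  have hodge_isotropic (x) (hx : x ∈ A.submoduleOf (⋀[K]^n V)) (y)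
      (hy : y ∈ A.submoduleOf (⋀[K]^n V)) : exteriorPower.pairingDual K V n (hodge x) y = 0 := by
    have scaled_pairing_eq_zero :=
      (wedgeForm_eq_pairingDual_hodgeStar hI b vol u x y).symm.trans (hA.isotropic x hx y hy)
    exact (mul_eq_zero.1 scaled_pairing_eq_zero).resolve_left
      (map_basis_top_ne_zero hI b hω hvol u)
  have finrank_submoduleOf : finrank K (A.submoduleOf (⋀[K]^n V)) = finrank K A :=
    (Submodule.submoduleOfEquivOfLe hA.le).finrank_eq
  have annihilator_eq : ⋀[K]^n (Dual K V) ⊓ ⨅ a ∈ A, LinearMap.ker (p.flip a) =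
      ((A.submoduleOf (⋀[K]^n V)).map hodge.toLinearMap).map
        (Submodule.subtype (⋀[K]^n (Dual K V))) := by
    rw [hp.annihilator_eq_map hA.le,
      map_eq_comap_dualAnnihilator (pairingDual_bijective b n).injective hodge
        (finrank_submoduleOf ▸ hA.two_mul_finrank) hodge_isotropic]
  refine ⟨inf_le_left, ?two_mul_finrank, ?isotropic⟩
  case two_mul_finrank =>
    rw [annihilator_eq, Submodule.finrank_map_subtype_eq, LinearEquiv.finrank_map_eq,
      finrank_submoduleOf, hA.two_mul_finrank, hodge.finrank_eq]
  case isotropic =>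
    rw [annihilator_eq]
    rintro _ ⟨_, ⟨x, hx, rfl⟩, rfl⟩ _ ⟨_, ⟨y, hy, rfl⟩, rfl⟩
    exact (wedgeForm_hodgeStar hI b φ u x y).trans (by rw [hodge_isotropic x hx y hy, mul_zero])

end Lagrangian

/-- Let `σ^∨` be the form on `⋀³(V^∨)` given by
`σ^∨(ψ,χ) = ⟨ψ∧χ, ω₀⟩` where `vol ω₀ = 1`, the pairings `p3 : ⋀³(V^∨) × ⋀³V → ℂ` and
`p6 : ⋀⁶(V^∨) × ⋀⁶V → ℂ` being the canonical determinant pairings. If `A ⊆ ⋀³V` is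
Lagrangian for `σ(α,β) = vol(α∧β)`, then the annihilator
`A^⊥ = {ψ ∈ ⋀³(V^∨) : ⟨ψ,a⟩ = 0 ∀ a ∈ A}` is a Lagrangian subspace of
`(⋀³(V^∨), σ^∨)`: it lies in `⋀³(V^∨)`, has dimension 10 and `σ^∨` vanishes on it. -/
theorem stmt14 (V : Type*) [AddCommGroup V] [Module ℂ V] [FiniteDimensional ℂ V]
    (hV : Module.finrank ℂ V = 6)
    (vol : ExteriorAlgebra ℂ V →ₗ[ℂ] ℂ)
    (hvol : Function.Bijective fun x : ⋀[ℂ]^6 V => vol x)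
    (ω₀ : ExteriorAlgebra ℂ V) (hω₀ : ω₀ ∈ ⋀[ℂ]^6 V) (hω₀vol : vol ω₀ = 1)
    (p3 : ExteriorAlgebra ℂ (Module.Dual ℂ V) →ₗ[ℂ] ExteriorAlgebra ℂ V →ₗ[ℂ] ℂ)
    (hp3 : ∀ (f : Fin 3 → Module.Dual ℂ V) (v : Fin 3 → V),
      p3 ((List.ofFn fun i => ι ℂ (f i)).prod) ((List.ofFn fun i => ι ℂ (v i)).prod) =
        Matrix.det (Matrix.of fun i j => f i (v j)))
    (p6 : ExteriorAlgebra ℂ (Module.Dual ℂ V) →ₗ[ℂ] ExteriorAlgebra ℂ V →ₗ[ℂ] ℂ)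
    (hp6 : ∀ (f : Fin 6 → Module.Dual ℂ V) (v : Fin 6 → V),
      p6 ((List.ofFn fun i => ι ℂ (f i)).prod) ((List.ofFn fun i => ι ℂ (v i)).prod) =
        Matrix.det (Matrix.of fun i j => f i (v j)))
    (A : Submodule ℂ (ExteriorAlgebra ℂ V))
    (hA3 : A ≤ ⋀[ℂ]^3 V) (hA10 : Module.finrank ℂ A = 10)
    (hAlag : ∀ x ∈ A, ∀ y ∈ A, vol (x * y) = 0) :
    (⋀[ℂ]^3 (Module.Dual ℂ V) ⊓ ⨅ a ∈ A, LinearMap.ker (p3.flip a)) ≤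
        ⋀[ℂ]^3 (Module.Dual ℂ V) ∧
    Module.finrank ℂ
      ↥(⋀[ℂ]^3 (Module.Dual ℂ V) ⊓ ⨅ a ∈ A, LinearMap.ker (p3.flip a)) = 10 ∧
    ∀ ψ ∈ ⋀[ℂ]^3 (Module.Dual ℂ V) ⊓ ⨅ a ∈ A, LinearMap.ker (p3.flip a),
      ∀ χ ∈ ⋀[ℂ]^3 (Module.Dual ℂ V) ⊓ ⨅ a ∈ A, LinearMap.ker (p3.flip a),
        p6 (ψ * χ) ω₀ = 0 := by
  have hA : IsLagrangian 3 vol A := ⟨hA3, by rw [exteriorPower.finrank_eq, hV, hA10]; rfl, hAlag⟩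
  obtain ⟨le, two_mul_finrank, isotropic⟩ := stmt14_general (n := 3) hV hω₀
    (hω₀vol ▸ one_ne_zero) (p6.flip ω₀) hp3 hA
  rw [exteriorPower.finrank_eq, Subspace.dual_finrank_eq, hV] at two_mul_finrank
  exact ⟨le, Nat.eq_of_mul_eq_mul_left two_pos two_mul_finrank, isotropic⟩
end

section
/- For every Lagrangian subspace A of (⋀³V, σ) there exists a nonzero vector v ∈ V such that A ∩ F_v ≠ {0}. (Equivalently: the EPW sextic Y_A = {[v] ∈ ℙ(V) : A ∩ F_v ≠ 0} is never empty.) -/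
/-!
Restrict the family `v ↦ F_v` to a line in `ℙ(V)`: write `V = ⟨e₀, e₁⟩ ⊕ U`. For every `v ≠ 0` in
the plane `⟨e₀, e₁⟩`, the space `F_v = v ∧ ⋀ᵖ⁺¹ V` is the direct sum of `v ∧ ⋀ᵖ⁺¹ U`, which moves
with `v`, and `B = e₀ ∧ e₁ ∧ ⋀ᵖ U`, which does not. If `A` meets `B` we are done. Otherwise, `v ∧ ·`
is a pencil of linear maps from `⋀ᵖ⁺¹ U` to `⋀ᵖ⁺² V ⧸ (A ⊕ B)`, and the dimension of the target is
at most that of the source; as the field is algebraically closed, some member of the pencil has a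
nonzero `x` in its kernel. Then `v ∧ x ∈ A ⊕ B`, and its component in `A` is a nonzero element of
`F_v`, since `v ∧ x ∉ B`.
-/

open ExteriorAlgebra

open Module

section Pencil

variable {K E F : Type*} [Field K] [IsAlgClosed K] [AddCommGroup E] [Module K E]
  [AddCommGroup F] [Module K F]

theorem exists_smul_add_smul_eq_zero_of_finrank_le [Nontrivial E] [FiniteDimensional K F]
    (h : finrank K F ≤ finrank K E) (f g : E →ₗ[K] F) :
    ∃ c : K × K, c ≠ 0 ∧ ∃ x ≠ 0, c.1 • f x + c.2 • g x = 0 := by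
  by_cases hf : Function.Injective f
  · have : FiniteDimensional K E := Module.Finite.of_injective f hf
    let e : E ≃ₗ[K] F :=
      f.linearEquivOfInjective hf (h.antisymm' (LinearMap.finrank_le_finrank_of_injective hf))
    obtain ⟨μ, hμ⟩ := Module.End.exists_eigenvalue (e.symm.toLinearMap ∘ₗ g)
    obtain ⟨x, hx⟩ := hμ.exists_hasEigenvector
    have hgx : g x = μ • f x := by
      have : e.symm (g x) = μ • x := hx.apply_eq_smul
      rw [e.symm_apply_eq, map_smul] at this
      exact this
    exact ⟨(-μ, 1), by simp, x, hx.2, by simp [hgx]⟩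
  · obtain ⟨x, hx, hx0⟩ : ∃ x, f x = 0 ∧ x ≠ 0 := by
      simpa [injective_iff_map_eq_zero] using hf
    exact ⟨(1, 0), by simp, x, hx0, by simp [hx]⟩

theorem exists_smul_add_smul_mem_of_finrank_le [Nontrivial E] {C W : Submodule K F}
    [FiniteDimensional K W] (hCW : C ≤ W) (h : finrank K W ≤ finrank K C + finrank K E)
    (f g : E →ₗ[K] F) (hf : ∀ x, f x ∈ W) (hg : ∀ x, g x ∈ W) :
    ∃ c : K × K, c ≠ 0 ∧ ∃ x ≠ 0, c.1 • f x + c.2 • g x ∈ C := by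
  have hquot : finrank K (W ⧸ C.submoduleOf W) ≤ finrank K E := by
    have hsum := (C.submoduleOf W).finrank_quotient_add_finrank
    rw [(Submodule.submoduleOfEquivOfLe hCW).finrank_eq] at hsum
    lia
  obtain ⟨c, hc, x, hx, hcx⟩ := exists_smul_add_smul_eq_zero_of_finrank_le hquot
    ((C.submoduleOf W).mkQ ∘ₗ f.codRestrict W hf) ((C.submoduleOf W).mkQ ∘ₗ g.codRestrict W hg)
  exact ⟨c, hc, x, hx, (Submodule.Quotient.mk_eq_zero (C.submoduleOf W)).1 hcx⟩

end Pencil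

section CommRing

variable {R M N : Type*} [CommRing R] [AddCommGroup M] [Module R M] [AddCommGroup N] [Module R N]

theorem ι_mul_mem_exteriorPower_succ (v : M) {n : ℕ} {x : ExteriorAlgebra R M}
    (hx : x ∈ ⋀[R]^n M) : ι R v * x ∈ ⋀[R]^(n + 1) M := by
  rw [exteriorPower, pow_succ']
  exact Submodule.mul_mem_mul ⟨v, rfl⟩ hx

theorem ι_mul_ι_eq_neg_ι_mul_ι (v w : M) : ι R v * ι R w = -(ι R w * ι R v) :=
  eq_neg_of_add_eq_zero_left (ι_add_mul_swap v w)

theorem map_mem_exteriorPower (f : N →ₗ[R] M) {n : ℕ} {x : ExteriorAlgebra R N}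
    (hx : x ∈ ⋀[R]^n N) : ExteriorAlgebra.map f x ∈ ⋀[R]^n M := by
  have hle : (⋀[R]^n N).map (ExteriorAlgebra.map f).toLinearMap ≤ ⋀[R]^n M := by
    rw [exteriorPower, Submodule.map_pow, ι_range_map_map]
    exact pow_le_pow_left' LinearMap.map_le_range n
  exact hle ⟨x, hx, rfl⟩

/-- Contraction of the exterior algebra with a linear form: the antiderivation extending the form,
obtained from the Clifford algebra of the zero quadratic form. -/
noncomputable def contraction : Dual R M →ₗ[R] ExteriorAlgebra R M →ₗ[R] ExteriorAlgebra R M :=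
  CliffordAlgebra.contractLeft (Q := 0)

theorem contraction_algebraMap (d : Dual R M) (r : R) :
    contraction d (algebraMap R (ExteriorAlgebra R M) r) = 0 :=
  CliffordAlgebra.contractLeft_algebraMap _ d r

theorem contraction_ι_mul (d : Dual R M) (v : M) (x : ExteriorAlgebra R M) :
    contraction d (ι R v * x) = d v • x - ι R v * contraction d x :=
  CliffordAlgebra.contractLeft_ι_mul d v x

theorem contraction_map (d : Dual R M) (f : N →ₗ[R] M) (x : ExteriorAlgebra R N) :
    contraction d (ExteriorAlgebra.map f x) = ExteriorAlgebra.map f (contraction (d ∘ₗ f) x) := by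
  induction x using CliffordAlgebra.left_induction with
  | algebraMap r =>
    change contraction d (ExteriorAlgebra.map f (algebraMap R (ExteriorAlgebra R N) r)) =
      ExteriorAlgebra.map f (contraction (d ∘ₗ f) (algebraMap R (ExteriorAlgebra R N) r))
    rw [AlgHom.commutes, contraction_algebraMap, contraction_algebraMap, map_zero]
  | add x y hx hy => simp only [map_add, hx, hy]
  | ι_mul x v hx =>
    change contraction d (ExteriorAlgebra.map f (ι R v * x)) =
      ExteriorAlgebra.map f (contraction (d ∘ₗ f) (ι R v * x))
    rw [map_mul, map_apply_ι, contraction_ι_mul, contraction_ι_mul, hx, map_sub, map_smul, map_mul,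
      map_apply_ι, LinearMap.comp_apply]

theorem contraction_map_eq_zero {d : Dual R M} {f : N →ₗ[R] M} (h : d ∘ₗ f = 0)
    (x : ExteriorAlgebra R N) : contraction d (ExteriorAlgebra.map f x) = 0 := by
  rw [contraction_map, h, map_zero, LinearMap.zero_apply, map_zero]

theorem eq_zero_of_ι_mul_eq_zero {d : Dual R M} {v : M} (hdv : d v = 1) {x : ExteriorAlgebra R M}
    (hdx : contraction d x = 0) (hvx : ι R v * x = 0) : x = 0 := by
  simpa [hdv, hdx, hvx] using (contraction_ι_mul d v x).symm

/-- The submodule `e₀ ∧ e₁ ∧ ⋀ⁿ U` of `⋀ⁿ⁺² M`, where `U` is the kernel of `φ`. In its uses `φ` is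
the pair of coordinates on the plane `⟨e₀, e₁⟩`, so that `M = ⟨e₀, e₁⟩ ⊕ U`; over a field, it is
then the common part of the subspaces `v ∧ ⋀ⁿ⁺¹ M` for `v ≠ 0` in that plane. -/
noncomputable def planeWedge (φ : M →ₗ[R] R × R) (e₀ e₁ : M) (n : ℕ) :
    Submodule R (ExteriorAlgebra R M) :=
  (⋀[R]^n (LinearMap.ker φ)).map
    (LinearMap.mulLeft R (ι R e₀ * ι R e₁) ∘ₗ
      (ExteriorAlgebra.map (LinearMap.ker φ).subtype).toLinearMap)

theorem planeWedge_le_exteriorPower (φ : M →ₗ[R] R × R) (e₀ e₁ : M) (n : ℕ) :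
    planeWedge φ e₀ e₁ n ≤ ⋀[R]^(n + 2) M := by
  rintro _ ⟨y, hy, rfl⟩
  simp only [LinearMap.comp_apply, LinearMap.mulLeft_apply, mul_assoc]
  exact ι_mul_mem_exteriorPower_succ e₀
    (ι_mul_mem_exteriorPower_succ e₁ (map_mem_exteriorPower _ hy))

theorem apply_smul_add_smul_eq_self {φ : M →ₗ[R] R × R} {e₀ e₁ : M} (h₀ : φ e₀ = (1, 0))
    (h₁ : φ e₁ = (0, 1)) (c : R × R) : φ (c.1 • e₀ + c.2 • e₁) = c := by
  simp [h₀, h₁]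

end CommRing

section Plane

variable {K V : Type*} [Field K] [AddCommGroup V] [Module K V]

theorem exists_linearMap_prod_of_two_le_finrank (h : 2 ≤ finrank K V) :
    ∃ (φ : V →ₗ[K] K × K) (e₀ e₁ : V), φ e₀ = (1, 0) ∧ φ e₁ = (0, 1) := by
  have : FiniteDimensional K V := .of_finrank_pos (by lia)
  obtain ⟨i, hi⟩ : ∃ i : K × K →ₗ[K] V, Function.Injective i :=
    finrank_le_iff_exists_linearMap.1 (by simpa using h)
  obtain ⟨φ, hφ⟩ := i.exists_leftInverse_of_injective (LinearMap.ker_eq_bot.2 hi)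
  exact ⟨φ, i (1, 0), i (0, 1), LinearMap.congr_fun hφ _, LinearMap.congr_fun hφ _⟩

theorem exists_ι_mul_ι_eq_ι_mul_ι (e₀ e₁ : V) {c : K × K} (hc : c ≠ 0) :
    ∃ w, ι K (c.1 • e₀ + c.2 • e₁) * ι K w = ι K e₀ * ι K e₁ := by
  by_cases h : c.1 = 0
  · have hc₂ : c.2 ≠ 0 := fun h' => hc (Prod.ext h h')
    exact ⟨-c.2⁻¹ • e₀, by simp [h, ι_mul_ι_eq_neg_ι_mul_ι e₁ e₀, smul_smul, hc₂]⟩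
  · exact ⟨c.1⁻¹ • e₁, by simp [add_mul, smul_smul, h]⟩

theorem planeWedge_le_map_mulLeft (φ : V →ₗ[K] K × K) (e₀ e₁ : V) (n : ℕ) {c : K × K}
    (hc : c ≠ 0) : planeWedge φ e₀ e₁ n ≤
      (⋀[K]^(n + 1) V).map (LinearMap.mulLeft K (ι K (c.1 • e₀ + c.2 • e₁))) := by
  obtain ⟨w, hw⟩ := exists_ι_mul_ι_eq_ι_mul_ι e₀ e₁ hc
  rintro _ ⟨y, hy, rfl⟩
  refine ⟨ι K w * ExteriorAlgebra.map (LinearMap.ker φ).subtype y,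
    ι_mul_mem_exteriorPower_succ w (map_mem_exteriorPower _ hy), ?_⟩
  simp [← hw, ← mul_assoc]

variable {φ : V →ₗ[K] K × K} {e₀ e₁ : V} (h₀ : φ e₀ = (1, 0)) (h₁ : φ e₁ = (0, 1))
include h₀ h₁

theorem finrank_ker_add_two [FiniteDimensional K V] :
    finrank K (LinearMap.ker φ) + 2 = finrank K V := by
  have hφ : LinearMap.range φ = ⊤ :=
    LinearMap.range_eq_top.2 fun c => ⟨_, apply_smul_add_smul_eq_self h₀ h₁ c⟩
  have := φ.finrank_range_add_finrank_ker
  rw [hφ, finrank_top, finrank_prod, finrank_self] at this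
  lia

theorem injective_ι_mul_ι_mul_map_ker_subtype :
    Function.Injective (LinearMap.mulLeft K (ι K e₀ * ι K e₁) ∘ₗ
      (ExteriorAlgebra.map (LinearMap.ker φ).subtype).toLinearMap) := by
  rw [injective_iff_map_eq_zero]
  intro x hx
  set y := ExteriorAlgebra.map (LinearMap.ker φ).subtype x
  have hd₀ : contraction (LinearMap.fst K K K ∘ₗ φ) y = 0 :=
    contraction_map_eq_zero (by ext; simp) x
  have hd₁ : contraction (LinearMap.snd K K K ∘ₗ φ) y = 0 :=
    contraction_map_eq_zero (by ext; simp) x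
  have he₁y : ι K e₁ * y = 0 := by
    refine eq_zero_of_ι_mul_eq_zero (d := LinearMap.fst K K K ∘ₗ φ) (v := e₀) (by simp [h₀]) ?_ ?_
    · simp [contraction_ι_mul, hd₀, h₁]
    · rw [← mul_assoc]
      exact hx
  have hy0 : y = 0 := eq_zero_of_ι_mul_eq_zero (by simp [h₁]) hd₁ he₁y
  exact (map_eq_zero_iff _ (map_injective_field (LinearMap.ker φ).ker_subtype)).1 hy0

theorem finrank_planeWedge [FiniteDimensional K V] (n : ℕ) :
    finrank K (planeWedge φ e₀ e₁ n) = (finrank K (LinearMap.ker φ)).choose n := by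
  rw [planeWedge, ← exteriorPower.finrank_eq]
  exact (Submodule.equivMapOfInjective _
    (injective_ι_mul_ι_mul_map_ker_subtype h₀ h₁) _).finrank_eq.symm

theorem eq_zero_of_ι_mul_map_mem_planeWedge {c : K × K} (hc : c ≠ 0) {n : ℕ}
    {x : ExteriorAlgebra K (LinearMap.ker φ)}
    (hx : ι K (c.1 • e₀ + c.2 • e₁) * ExteriorAlgebra.map (LinearMap.ker φ).subtype x ∈
      planeWedge φ e₀ e₁ n) : x = 0 := by
  obtain ⟨w, hw⟩ := exists_ι_mul_ι_eq_ι_mul_ι e₀ e₁ hc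
  obtain ⟨y, -, hy⟩ := hx
  apply (injective_iff_map_eq_zero _).1 (injective_ι_mul_ι_mul_map_ker_subtype h₀ h₁)
  set v := c.1 • e₀ + c.2 • e₁
  have hvw : ι K v * ι K w = -(ι K w * ι K v) := ι_mul_ι_eq_neg_ι_mul_ι v w
  simp only [LinearMap.comp_apply, LinearMap.mulLeft_apply, AlgHom.toLinearMap_apply] at hy ⊢
  calc ι K e₀ * ι K e₁ * ExteriorAlgebra.map (LinearMap.ker φ).subtype x
      = -(ι K w * (ι K v * ExteriorAlgebra.map (LinearMap.ker φ).subtype x)) := by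
        rw [← hw, hvw, neg_mul, mul_assoc]
    _ = -(ι K w * (ι K v * ι K w * ExteriorAlgebra.map (LinearMap.ker φ).subtype y)) := by
        rw [hw, hy]
    _ = ι K w * ι K w * (ι K v * ExteriorAlgebra.map (LinearMap.ker φ).subtype y) := by
        simp only [hvw, neg_mul, mul_neg, neg_neg, mul_assoc]
    _ = 0 := by rw [ι_sq_zero, zero_mul]

theorem finrank_exteriorPower_le_finrank_sup_planeWedge_add [FiniteDimensional K V] {p : ℕ}
    {A : Submodule K (ExteriorAlgebra K V)} (hA : A ≤ ⋀[K]^(p + 2) V)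
    (hdim : (finrank K V - 1).choose (p + 2) ≤ finrank K A)
    (hdisj : Disjoint A (planeWedge φ e₀ e₁ p)) :
    finrank K (⋀[K]^(p + 2) V) ≤
      finrank K ↥(A ⊔ planeWedge φ e₀ e₁ p) + finrank K (⋀[K]^(p + 1) (LinearMap.ker φ)) := by
  have := Submodule.finiteDimensional_of_le hA
  have := Submodule.finiteDimensional_of_le (planeWedge_le_exteriorPower φ e₀ e₁ p)
  have hker := finrank_ker_add_two h₀ h₁
  have hsup := Submodule.finrank_sup_add_finrank_inf_eq A (planeWedge φ e₀ e₁ p)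
  rw [hdisj.eq_bot, finrank_bot, finrank_planeWedge h₀ h₁] at hsup
  rw [exteriorPower.finrank_eq, exteriorPower.finrank_eq, ← hker, Nat.choose_succ_succ',
    Nat.choose_succ_succ' _ p]
  rw [← hker] at hdim
  lia

theorem exists_ι_mul_map_mem_sup_planeWedge [IsAlgClosed K] {p : ℕ}
    (hp : p + 3 ≤ finrank K V) {A : Submodule K (ExteriorAlgebra K V)}
    (hA : A ≤ ⋀[K]^(p + 2) V) (hdim : (finrank K V - 1).choose (p + 2) ≤ finrank K A)
    (hdisj : Disjoint A (planeWedge φ e₀ e₁ p)) :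
    ∃ c : K × K, c ≠ 0 ∧ ∃ x : ExteriorAlgebra K (LinearMap.ker φ), x ≠ 0 ∧
      x ∈ ⋀[K]^(p + 1) (LinearMap.ker φ) ∧
      ι K (c.1 • e₀ + c.2 • e₁) * ExteriorAlgebra.map (LinearMap.ker φ).subtype x ∈
        A ⊔ planeWedge φ e₀ e₁ p := by
  have : FiniteDimensional K V := .of_finrank_pos (by lia)
  have hker := finrank_ker_add_two h₀ h₁
  have hle := planeWedge_le_exteriorPower φ e₀ e₁ p
  have : Nontrivial (⋀[K]^(p + 1) (LinearMap.ker φ)) := by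
    refine nontrivial_of_finrank_pos (R := K) ?_
    rw [exteriorPower.finrank_eq]
    exact Nat.choose_pos (by lia)
  have hcodim := finrank_exteriorPower_le_finrank_sup_planeWedge_add h₀ h₁ hA hdim hdisj
  let L (v : V) : ⋀[K]^(p + 1) (LinearMap.ker φ) →ₗ[K] ExteriorAlgebra K V :=
    LinearMap.mulLeft K (ι K v) ∘ₗ (ExteriorAlgebra.map (LinearMap.ker φ).subtype).toLinearMap ∘ₗ
      Submodule.subtype _
  have hL (v : V) (x) : L v x ∈ ⋀[K]^(p + 2) V :=
    ι_mul_mem_exteriorPower_succ v (map_mem_exteriorPower _ x.2)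
  obtain ⟨c, hc, x, hx, hcx⟩ := exists_smul_add_smul_mem_of_finrank_le (sup_le hA hle) hcodim
    (L e₀) (L e₁) (hL e₀) (hL e₁)
  refine ⟨c, hc, x, by simpa using hx, x.2, ?_⟩
  simpa [L, add_mul] using hcx

end Plane

theorem stmt16_general {K V : Type*} [Field K] [IsAlgClosed K] [AddCommGroup V] [Module K V]
    {p : ℕ} (hp : p + 3 ≤ finrank K V)
    {A : Submodule K (ExteriorAlgebra K V)} (hA : A ≤ ⋀[K]^(p + 2) V)
    (hdim : (finrank K V - 1).choose (p + 2) ≤ finrank K A) :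
    ∃ v : V, v ≠ 0 ∧ A ⊓ (⋀[K]^(p + 1) V).map (LinearMap.mulLeft K (ι K v)) ≠ ⊥ := by
  obtain ⟨φ, e₀, e₁, h₀, h₁⟩ := exists_linearMap_prod_of_two_le_finrank (K := K) (V := V) (by lia)
  suffices ∃ c : K × K, c ≠ 0 ∧
      A ⊓ (⋀[K]^(p + 1) V).map (LinearMap.mulLeft K (ι K (c.1 • e₀ + c.2 • e₁))) ≠ ⊥ by
    obtain ⟨c, hc, hne⟩ := this
    refine ⟨_, fun hv => hc ?_, hne⟩
    rw [← apply_smul_add_smul_eq_self h₀ h₁ c, hv, map_zero]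
  by_cases hdisj : Disjoint A (planeWedge φ e₀ e₁ p)
  · obtain ⟨c, hc, x, hx0, hx, hmem⟩ := exists_ι_mul_map_mem_sup_planeWedge h₀ h₁ hp hA hdim hdisj
    obtain ⟨a, ha, b, hb, hab⟩ := Submodule.mem_sup.1 hmem
    refine ⟨c, hc, (Submodule.ne_bot_iff _).2 ⟨a, ⟨ha, ?_⟩, fun ha0 => hx0 ?_⟩⟩
    · rw [eq_sub_of_add_eq hab]
      exact sub_mem ⟨_, map_mem_exteriorPower _ hx, rfl⟩ (planeWedge_le_map_mulLeft φ e₀ e₁ p hc hb)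
    · rw [ha0, zero_add] at hab
      exact eq_zero_of_ι_mul_map_mem_planeWedge h₀ h₁ hc (hab ▸ hb)
  · have hc : ((1, 0) : K × K) ≠ 0 := by simp
    exact ⟨(1, 0), hc, fun h => hdisj <|
      (disjoint_iff.2 h).mono_right (planeWedge_le_map_mulLeft φ e₀ e₁ p hc)⟩

/-- For every Lagrangian subspace `A` of `(⋀³V, σ)` there is a nonzero
`v ∈ V` with `A ∩ F_v ≠ 0`; i.e. the EPW sextic `Y_A` is never empty. -/
theorem stmt16 (V : Type*) [AddCommGroup V] [Module ℂ V] [FiniteDimensional ℂ V]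
    (hV : Module.finrank ℂ V = 6)
    (vol : ExteriorAlgebra ℂ V →ₗ[ℂ] ℂ)
    (hvol : Function.Bijective fun x : ⋀[ℂ]^6 V => vol x)
    (A : Submodule ℂ (ExteriorAlgebra ℂ V))
    (hA3 : A ≤ ⋀[ℂ]^3 V) (hA10 : Module.finrank ℂ A = 10)
    (hAlag : ∀ x ∈ A, ∀ y ∈ A, vol (x * y) = 0) :
    ∃ v : V, v ≠ 0 ∧ A ⊓ Fsub v ≠ ⊥ := by
  exact stmt16_general (p := 1) (by lia) hA3 (by rw [hV, hA10]; decide)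
end
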